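/- Let k ≥ 1 and let S = S₁ ∪ ⋯ ∪ S_k ⊂ ℝ³, where each S_j is a unit sphere passing through the origin, i.e. S_j = {p ∈ ℝ³ : |p − v_j| = 1} for some v_j ∈ ℝ³ with |v_j| = 1. Then there exist a sequence of positive real numbers ε_n → 0, a sequence of smooth maps g̃_n : ∂𝔻 → ℝ³, and a sequence of maps u_n : closure(𝔻) → ℝ³, each continuous on the closed unit disk and C² on 𝔻, such that for every n: Δu_n = 2 (u_n)_x ∧ (u_n)_y at every point of 𝔻, u_n = ε_n g̃_n on ∂𝔻, and the images u_n(closure(𝔻)) converge to S in the Hausdorff distance as n → ∞. -/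

import Mathlib

noncomputable section

open Metric Filter

/-- `ℝ³` with the Euclidean norm. -/
abbrev R3 : Type := EuclideanSpace ℝ (Fin 3)

/-- The vector in `ℝ³` with the given coordinates. -/
def e3 (a b c : ℝ) : R3 := (WithLp.equiv 2 (Fin 3 → ℝ)).symm ![a, b, c]

/-- The cross product on `ℝ³`. -/
def cross (a b : R3) : R3 :=
  e3 (a 1 * b 2 - a 2 * b 1) (a 2 * b 0 - a 0 * b 2) (a 0 * b 1 - a 1 * b 0)

/-- Partial derivative in the `x` direction, identifying `ℝ²` with `ℂ` via `z = x + iy`. -/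
def pdx (u : ℂ → R3) (z : ℂ) : R3 := fderiv ℝ u z 1

/-- Partial derivative in the `y` direction. -/
def pdy (u : ℂ → R3) (z : ℂ) : R3 := fderiv ℝ u z Complex.I

/-- Componentwise Laplacian. -/
def lap (u : ℂ → R3) (z : ℂ) : R3 := pdx (pdx u) z + pdy (pdy u) z

/-!
Substituting independent variables `(z, w)` for `(z, star z)` turns the H-system into
`∂Y/∂z∂w = -i ∂Y/∂z × ∂Y/∂w`, a Goursat problem for holomorphic `Y`, and a solution `Y` restricts
to a solution `Re Y (z, star z)` of the H-system. For holomorphic `h`, the inverse stereographic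
projection composed with `h` is such a solution. With `h = M exp (λ (star a * z) - λ - 1)`,
`|a| = 1` and `λ` large, it covers almost all of its sphere near the boundary point `a` of the unit
disk and is exponentially close to the common point `0` of the spheres elsewhere.

For distinct points `a₁, …, a_k` of the unit circle the sum of the corresponding bubbles solves the
system up to an interaction term of size `exp (-c λ)`. Picard iteration for the Goursat problem, in
a weighted supremum norm in which the gradients of the bubbles have bounded integral, removes this
error by an exponentially small correction. This uses that the integration paths `(z, τ w)` avoid
the poles of the complexified bubbles: there `h (s z) * star (h (t z))` stays away from `-1`,
because its argument is small wherever its modulus is not.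
-/

open Set Topology

section Holomorphic
open scoped ContDiff

variable {E F : Type*} [NormedAddCommGroup E] [NormedSpace ℂ E]
  [NormedAddCommGroup F] [NormedSpace ℂ F]

theorem norm_fderiv_le_of_norm_le_on_ball {f : E → F} {c : E} {r M : ℝ} (hr : 0 < r)
    (hf : DifferentiableOn ℂ f (ball c r)) (hM : ∀ x ∈ ball c r, ‖f x‖ ≤ M) :
    ‖fderiv ℂ f c‖ ≤ 2 * M / r := by
  refine Complex.norm_fderiv_le_div_of_mapsTo_ball hf (fun x hx => ?_) hr
  rw [mem_closedBall_iff_norm]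
  linarith [norm_sub_le (f x) (f c), hM x hx, hM c (mem_ball_self hr)]

theorem dist_fderiv_le_of_dist_le_on_ball {f g : E → F} {c : E} {r M : ℝ} (hr : 0 < r)
    (hf : DifferentiableOn ℂ f (ball c r)) (hg : DifferentiableOn ℂ g (ball c r))
    (hM : ∀ x ∈ ball c r, dist (f x) (g x) ≤ M) :
    dist (fderiv ℂ f c) (fderiv ℂ g c) ≤ 2 * M / r := by
  have hc : ball c r ∈ 𝓝 c := ball_mem_nhds c hr
  rw [dist_eq_norm, ← fderiv_sub (hf.differentiableAt hc) (hg.differentiableAt hc)]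
  exact norm_fderiv_le_of_norm_le_on_ball hr (hf.sub hg) fun x hx => by
    simpa [dist_eq_norm] using hM x hx

theorem uniformCauchySeqOn_fderiv {f : ℕ → E → F} {c : E} {r : ℝ} (hr : 0 < r)
    (hf : ∀ n, DifferentiableOn ℂ (f n) (ball c (2 * r)))
    (hc : UniformCauchySeqOn f atTop (ball c (2 * r))) :
    UniformCauchySeqOn (fun n => fderiv ℂ (f n)) atTop (ball c r) := by
  rw [Metric.uniformCauchySeqOn_iff] at hc ⊢
  intro ε hε
  obtain ⟨N, hN⟩ := hc (ε * r / 4) (by positivity)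
  refine ⟨N, fun m hm n hn x hx => ?_⟩
  have hsub : ball x r ⊆ ball c (2 * r) := ball_subset_ball' (by linarith [mem_ball.1 hx])
  calc _ ≤ 2 * (ε * r / 4) / r := dist_fderiv_le_of_dist_le_on_ball hr ((hf m).mono hsub)
        ((hf n).mono hsub) fun y hy => (hN m hm n hn y (hsub hy)).le
    _ = ε / 2 := by field_simp; norm_num
    _ < ε := half_lt_self hε

theorem differentiableOn_of_tendstoUniformlyOn [CompleteSpace F] {f : ℕ → E → F} {g : E → F}
    {s : Set E} (hs : IsOpen s) (hf : ∀ n, DifferentiableOn ℂ (f n) s)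
    (hfg : TendstoUniformlyOn f g atTop s) : DifferentiableOn ℂ g s := by
  intro c hc
  obtain ⟨r, hr, hrs⟩ := Metric.isOpen_iff.1 hs c hc
  rw [← mul_div_cancel₀ r two_ne_zero] at hrs
  have hr2 : r / 2 ≤ 2 * (r / 2) := by linarith
  have hcau := uniformCauchySeqOn_fderiv (half_pos hr) (fun n => (hf n).mono hrs)
    (hfg.uniformCauchySeqOn.mono hrs)
  choose! g' hg' using fun x (hx : x ∈ ball c (r / 2)) =>
    CompleteSpace.complete (hcau.cauchy_map hx)
  have key := hasFDerivAt_of_tendstoUniformlyOn isOpen_ball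
    (hcau.tendstoUniformlyOn_of_tendsto hg') (fun n x hx => ((hf n).differentiableAt
      (hs.mem_nhds (hrs (ball_subset_ball hr2 hx)))).hasFDerivAt)
    (fun x hx => hfg.tendsto_at (hrs (ball_subset_ball hr2 hx))) (mem_ball_self (half_pos hr))
  exact key.differentiableAt.differentiableWithinAt

theorem continuousOn_fderiv_param [ProperSpace E] {f : E → ℝ → F} {U : Set E} {T : Set ℝ}
    (hU : IsOpen U) (hT : IsCompact T) (hf : ContinuousOn (fun p : E × ℝ => f p.1 p.2) (U ×ˢ T))
    (hd : ∀ t ∈ T, DifferentiableOn ℂ (f · t) U) {x : E} (hx : x ∈ U) :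
    ContinuousOn (fun t => fderiv ℂ (f · t) x) T := by
  obtain ⟨r, hr, hrU⟩ := nhds_basis_closedBall.mem_iff.1 (hU.mem_nhds hx)
  have huc := ((isCompact_closedBall x r).prod hT).uniformContinuousOn_of_continuous
    (hf.mono (prod_mono_left hrU))
  have hball : ∀ t ∈ T, DifferentiableOn ℂ (f · t) (ball x r) := fun t ht =>
    (hd t ht).mono (ball_subset_closedBall.trans hrU)
  rw [Metric.continuousOn_iff]
  intro t ht ε hε
  obtain ⟨δ, hδ, h⟩ := Metric.uniformContinuousOn_iff.1 huc (ε * r / 4) (by positivity)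
  refine ⟨δ, hδ, fun s hs hst => ?_⟩
  calc _ ≤ 2 * (ε * r / 4) / r :=
        dist_fderiv_le_of_dist_le_on_ball hr (hball s hs) (hball t ht) fun y hy =>
          (h (y, s) ⟨ball_subset_closedBall hy, hs⟩ (y, t) ⟨ball_subset_closedBall hy, ht⟩
            (by simpa [Prod.dist_eq] using hst)).le
    _ = ε / 2 := by field_simp; norm_num
    _ < ε := half_lt_self hε

theorem hasFDerivAt_intervalIntegral [ProperSpace E] [CompleteSpace F] {f : E → ℝ → F}
    {U : Set E} {a b : ℝ} (hU : IsOpen U)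
    (hf : ContinuousOn (fun p : E × ℝ => f p.1 p.2) (U ×ˢ uIcc a b))
    (hd : ∀ t ∈ uIcc a b, DifferentiableOn ℂ (f · t) U) {x : E} (hx : x ∈ U) :
    HasFDerivAt (fun x => ∫ t in a..b, f x t) (∫ t in a..b, fderiv ℂ (f · t) x) x := by
  obtain ⟨r, hr, hrU⟩ := nhds_basis_closedBall.mem_iff.1 (hU.mem_nhds hx)
  obtain ⟨M, hM⟩ := ((isCompact_closedBall x r).prod isCompact_uIcc).exists_bound_of_continuousOn
    (hf.mono (prod_mono_left hrU))
  have hcont : ∀ y ∈ U, ContinuousOn (f y) (uIcc a b) := fun y hy =>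
    hf.comp (g := fun p : E × ℝ => f p.1 p.2) (f := fun t => (y, t)) (by fun_prop)
      fun t ht => ⟨hy, ht⟩
  have hsub : ∀ y ∈ ball x (r / 2), ball y (r / 2) ⊆ closedBall x r := fun y hy =>
    (ball_subset_ball' (by linarith [mem_ball.1 hy])).trans ball_subset_closedBall
  refine intervalIntegral.hasFDerivAt_integral_of_dominated_of_fderiv_le
    (F' := fun y t => fderiv ℂ (f · t) y) (bound := fun _ => 2 * M / (r / 2))
    (ball_mem_nhds x (half_pos hr)) ?_ (hcont x hx).intervalIntegrable ?_ ?_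
    intervalIntegrable_const ?_
  · filter_upwards [hU.mem_nhds hx] with y hy
    exact ((hcont y hy).mono uIoc_subset_uIcc).aestronglyMeasurable measurableSet_uIoc
  · exact ((continuousOn_fderiv_param hU isCompact_uIcc hf hd hx).mono
      uIoc_subset_uIcc).aestronglyMeasurable measurableSet_uIoc
  · refine .of_forall fun t ht y hy => norm_fderiv_le_of_norm_le_on_ball (half_pos hr)
      ((hd t (uIoc_subset_uIcc ht)).mono ((hsub y hy).trans hrU)) fun w hw => ?_
    exact hM (w, t) ⟨hsub y hy hw, uIoc_subset_uIcc ht⟩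
  · refine .of_forall fun t ht y hy => ((hd t (uIoc_subset_uIcc ht)).differentiableAt
      (hU.mem_nhds (hrU (hsub y hy (mem_ball_self (half_pos hr)))))).hasFDerivAt

theorem differentiableOn_intervalIntegral [ProperSpace E] [CompleteSpace F] {f : E → ℝ → F}
    {U : Set E} {a b : ℝ} (hU : IsOpen U)
    (hf : ContinuousOn (fun p : E × ℝ => f p.1 p.2) (U ×ˢ uIcc a b))
    (hd : ∀ t ∈ uIcc a b, DifferentiableOn ℂ (f · t) U) :
    DifferentiableOn ℂ (fun x => ∫ t in a..b, f x t) U := fun _ hx =>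
  (hasFDerivAt_intervalIntegral hU hf hd hx).differentiableAt.differentiableWithinAt

theorem fderiv_apply_eq_circleIntegral [CompleteSpace F] {f : E → F} {U : Set E}
    (hU : IsOpen U) (hf : DifferentiableOn ℂ f U) {x v : E} {R : ℝ} (hR : 0 < R)
    (hx : ∀ ζ ∈ closedBall (0 : ℂ) R, x + ζ • v ∈ U) :
    fderiv ℂ f x v =
      (2 * Real.pi * Complex.I : ℂ)⁻¹ • ∮ ζ in C(0, R), ((ζ - 0) ^ 2)⁻¹ • f (x + ζ • v) := by
  have hline : Differentiable ℂ fun ζ : ℂ => x + ζ • v := by fun_prop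
  refine Eq.trans ?_ (Complex.two_pi_I_inv_smul_circleIntegral_sub_sq_inv_smul_of_differentiable
    (hU.preimage hline.continuous) hx (hf.comp hline.differentiableOn fun _ h => h)
    (mem_ball_self hR)).symm
  have hx0 : HasFDerivAt f (fderiv ℂ f x) (x + (0 : ℂ) • v) := by
    simpa using (hf.differentiableAt
      (hU.mem_nhds (by simpa using hx 0 (by simpa using hR.le)))).hasFDerivAt
  have hl : HasDerivAt (fun ζ : ℂ => x + ζ • v) v 0 := by
    simpa using ((hasDerivAt_id (0 : ℂ)).smul_const v).const_add x
  exact (hx0.comp_hasDerivAt 0 hl).deriv.symm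

theorem differentiableOn_fderiv_apply [ProperSpace E] [CompleteSpace F] {f : E → F} {U : Set E}
    (hU : IsOpen U) (hf : DifferentiableOn ℂ f U) (v : E) :
    DifferentiableOn ℂ (fun x => fderiv ℂ f x v) U := by
  intro x hx
  obtain ⟨r, hr, hrU⟩ := nhds_basis_ball.mem_iff.1 (hU.mem_nhds hx)
  set R := r / 2 / (‖v‖ + 1) with hR
  have hR0 : 0 < R := by positivity
  have hmem : ∀ y ∈ ball x (r / 2), ∀ ζ ∈ closedBall (0 : ℂ) R, y + ζ • v ∈ U := by
    intro y hy ζ hζ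
    have hζv : ‖ζ‖ * ‖v‖ ≤ r / 2 := by
      calc ‖ζ‖ * ‖v‖ ≤ R * (‖v‖ + 1) := by
            gcongr
            · simpa using hζ
            · simp
        _ = r / 2 := by rw [hR]; field_simp
    refine hrU (mem_ball.2 ((dist_triangle _ y _).trans_lt ?_))
    rw [dist_self_add_left, norm_smul]
    linarith [mem_ball.1 hy]
  have hcircle : ∀ θ, circleMap 0 R θ ∈ closedBall (0 : ℂ) R :=
    circleMap_mem_closedBall 0 hR0.le
  refine DifferentiableAt.differentiableWithinAt (DifferentiableOn.differentiableAt
    (s := ball x (r / 2)) (.congr (.const_smul ?_ _) fun y hy =>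
      fderiv_apply_eq_circleIntegral hU hf hR0 (hmem y hy)) (ball_mem_nhds x (half_pos hr)))
  refine differentiableOn_intervalIntegral isOpen_ball ?_ fun θ _ => ?_
  · have h0 : ∀ θ, circleMap 0 R θ ≠ 0 := fun θ => circleMap_ne_center hR0.ne'
    have : Continuous (circleMap 0 R) := continuous_circleMap 0 R
    have hfc : ContinuousOn (fun p : E × ℝ => f (p.1 + circleMap 0 R p.2 • v))
        (ball x (r / 2) ×ˢ uIcc 0 (2 * Real.pi)) :=
      hf.continuousOn.comp (f := fun p : E × ℝ => p.1 + circleMap 0 R p.2 • v)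
        (by fun_prop) fun p hp => hmem p.1 hp.1 _ (hcircle p.2)
    simp only [deriv_circleMap, sub_zero]
    refine ContinuousOn.smul (by fun_prop) (.smul (.inv₀ (by fun_prop) fun p _ => ?_) hfc)
    exact pow_ne_zero 2 (h0 p.2)
  · exact .const_smul (.const_smul (hf.comp (f := fun y => y + circleMap 0 R θ • v)
      (by fun_prop) fun y hy => hmem y hy _ (hcircle θ)) _) _

theorem contDiffOn_of_differentiableOn_finiteDimensional [FiniteDimensional ℂ E]
    [CompleteSpace F] {f : E → F} {U : Set E} (hU : IsOpen U) (hf : DifferentiableOn ℂ f U) :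
    ContDiffOn ℂ ∞ f U := by
  have : ProperSpace E := FiniteDimensional.proper ℂ E
  refine contDiffOn_infty.2 fun n => ?_
  induction n generalizing f with
  | zero => exact contDiffOn_zero.2 hf.continuousOn
  | succ n ih =>
    rw [Nat.cast_add_one, contDiffOn_succ_iff_fderiv_of_isOpen hU, contDiffOn_clm_apply]
    exact ⟨hf, by simp, fun v => ih (differentiableOn_fderiv_apply hU hf v)⟩

end Holomorphic

section Picard

variable {E F : Type*} [NormedAddCommGroup E] [NormedSpace ℂ E]
  [NormedAddCommGroup F] [NormedSpace ℂ F]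

theorem norm_sub_iterate_le {T : (E → F) → E → F} {U : Set E} {ω : E → ℝ} {ε : ℝ}
    (hT : ∀ f, DifferentiableOn ℂ f U → DifferentiableOn ℂ (T f) U)
    (h0 : ∀ x ∈ U, ‖T 0 x‖ ≤ ε / 2 * ω x)
    (hc : ∀ f g δ, DifferentiableOn ℂ f U → DifferentiableOn ℂ g U →
      (∀ x ∈ U, ‖f x‖ ≤ ε * ω x) → (∀ x ∈ U, ‖g x‖ ≤ ε * ω x) →
      (∀ x ∈ U, ‖f x - g x‖ ≤ δ * ω x) → ∀ x ∈ U, ‖T f x - T g x‖ ≤ δ / 2 * ω x)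
    (hεω : ∀ x ∈ U, 0 ≤ ε * ω x) (n : ℕ) :
    DifferentiableOn ℂ (T^[n] 0) U ∧ (∀ x ∈ U, ‖T^[n] 0 x‖ ≤ ε * (1 - (1 / 2) ^ n) * ω x) ∧
      ∀ x ∈ U, ‖T^[n + 1] 0 x - T^[n] 0 x‖ ≤ ε / 2 * (1 / 2) ^ n * ω x := by
  have hweak : ∀ m : ℕ, ∀ x ∈ U, ε * (1 - (1 / 2) ^ m) * ω x ≤ ε * ω x := fun m x hx => by
    have : 0 ≤ ε * ω x * (1 / 2) ^ m := mul_nonneg (hεω x hx) (by positivity)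
    linarith
  induction n with
  | zero => exact ⟨differentiableOn_const 0, by simp, by simpa using h0⟩
  | succ n ih =>
    obtain ⟨hd, hb, hs⟩ := ih
    have hd' : DifferentiableOn ℂ (T^[n + 1] 0) U := by
      rw [Function.iterate_succ_apply']; exact hT _ hd
    have hb' : ∀ x ∈ U, ‖T^[n + 1] 0 x‖ ≤ ε * (1 - (1 / 2) ^ (n + 1)) * ω x := fun x hx => by
      have := norm_sub_norm_le (T^[n + 1] 0 x) (T^[n] 0 x)
      rw [pow_succ]
      linarith [hb x hx, hs x hx]
    refine ⟨hd', hb', fun x hx => ?_⟩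
    have := hc _ _ _ hd' hd (fun y hy => (hb' y hy).trans (hweak _ y hy))
      (fun y hy => (hb y hy).trans (hweak _ y hy)) hs x hx
    rw [← Function.iterate_succ_apply' T, ← Function.iterate_succ_apply' T] at this
    exact this.trans_eq (by ring)

theorem differentiableOn_of_norm_sub_le_mul [CompleteSpace F] {f : ℕ → E → F} {g : E → F}
    {U : Set E} (hU : IsOpen U) {ω : E → ℝ} (hω : Continuous ω) {c : ℕ → ℝ}
    (hc : Tendsto c atTop (𝓝 0)) (hf : ∀ n, DifferentiableOn ℂ (f n) U)
    (hfg : ∀ n, ∀ x ∈ U, ‖g x - f n x‖ ≤ c n * ω x) : DifferentiableOn ℂ g U := by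
  intro x hx
  set s := U ∩ {y | |ω y| < |ω x| + 1}
  have hs : IsOpen s := hU.inter (isOpen_lt (by fun_prop) continuous_const)
  have hunif : TendstoUniformlyOn f g atTop s := by
    rw [Metric.tendstoUniformlyOn_iff]
    intro η hη
    have hc' := (hc.abs.mul_const (|ω x| + 1)).eventually_lt_const (by simpa using hη)
    filter_upwards [hc'] with n hn y hy
    rw [dist_eq_norm]
    calc ‖g y - f n y‖ ≤ |c n| * |ω y| := by
          rw [← abs_mul]; exact (hfg n y hy.1).trans (le_abs_self _)
      _ ≤ |c n| * (|ω x| + 1) := by gcongr; exact hy.2.le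
      _ < η := hn
  exact ((differentiableOn_of_tendstoUniformlyOn hs (fun n => (hf n).mono inter_subset_left)
    hunif).differentiableAt (hs.mem_nhds ⟨hx, by simp⟩)).differentiableWithinAt

theorem exists_differentiableOn_fixedPoint [CompleteSpace F] {T : (E → F) → E → F} {U : Set E}
    (hU : IsOpen U) {ω : E → ℝ} (hω : Continuous ω) {ε : ℝ}
    (hT : ∀ f, DifferentiableOn ℂ f U → DifferentiableOn ℂ (T f) U)
    (h0 : ∀ x ∈ U, ‖T 0 x‖ ≤ ε / 2 * ω x)
    (hc : ∀ f g δ, DifferentiableOn ℂ f U → DifferentiableOn ℂ g U →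
      (∀ x ∈ U, ‖f x‖ ≤ ε * ω x) → (∀ x ∈ U, ‖g x‖ ≤ ε * ω x) →
      (∀ x ∈ U, ‖f x - g x‖ ≤ δ * ω x) → ∀ x ∈ U, ‖T f x - T g x‖ ≤ δ / 2 * ω x) :
    ∃ f, DifferentiableOn ℂ f U ∧ (∀ x ∈ U, ‖f x‖ ≤ ε * ω x) ∧ ∀ x ∈ U, T f x = f x := by
  have hεω : ∀ x ∈ U, 0 ≤ ε * ω x := fun x hx => by linarith [(norm_nonneg _).trans (h0 x hx)]
  have key := norm_sub_iterate_le hT h0 hc hεω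
  have hdist : ∀ x ∈ U, ∀ n, dist (T^[n] 0 x) (T^[n + 1] 0 x) ≤ ε / 2 * ω x * (1 / 2) ^ n :=
    fun x hx n => by
      rw [dist_comm, dist_eq_norm]; exact ((key n).2.2 x hx).trans_eq (by ring)
  choose! f hf using fun x (hx : x ∈ U) =>
    cauchySeq_tendsto_of_complete (cauchySeq_of_le_geometric _ _ one_half_lt_one (hdist x hx))
  have hrate : ∀ n, ∀ x ∈ U, ‖f x - T^[n] 0 x‖ ≤ ε * (1 / 2) ^ n * ω x := fun n x hx => by
    rw [← dist_eq_norm, dist_comm]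
    refine (dist_le_of_le_geometric_of_tendsto _ _ one_half_lt_one (hdist x hx)
      (hf x hx) n).trans_eq ?_
    ring
  have hbound : ∀ x ∈ U, ‖f x‖ ≤ ε * ω x := fun x hx => by simpa using hrate 0 x hx
  have hlim : ∀ c : ℝ, Tendsto (fun n : ℕ => ε * (1 / 2) ^ n * c) atTop (𝓝 0) := fun c => by
    simpa using ((tendsto_pow_atTop_nhds_zero_of_lt_one (by norm_num : (0 : ℝ) ≤ 1 / 2)
      one_half_lt_one).const_mul ε).mul_const c
  have hfd : DifferentiableOn ℂ f U :=
    differentiableOn_of_norm_sub_le_mul hU hω (by simpa using hlim 1) (fun n => (key n).1) hrate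
  refine ⟨f, hfd, hbound, fun x hx => ?_⟩
  refine tendsto_nhds_unique (tendsto_iff_norm_sub_tendsto_zero.2 (squeeze_zero
    (fun _ => norm_nonneg _) (fun n => ?_) (hlim (ω x / 2))))
    ((tendsto_add_atTop_iff_nat 1).2 (hf x hx))
  rw [Function.iterate_succ_apply', norm_sub_rev]
  refine (hc f _ _ hfd (key n).1 hbound (fun y hy => ?_) (hrate n) x hx).trans_eq (by ring)
  have : 0 ≤ ε * ω y * (1 / 2) ^ n := mul_nonneg (hεω y hy) (by positivity)
  linarith [(key n).2.1 y hy]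

end Picard

section Primitive

variable {F : Type*} [NormedAddCommGroup F] [NormedSpace ℂ F] [CompleteSpace F]

theorem hasDerivAt_intervalIntegral {f : ℂ → ℝ → F} {f' : ℝ → F} {S : Set ℂ} {a b : ℝ} {z : ℂ}
    (hS : IsOpen S) (hf : ContinuousOn (fun p : ℂ × ℝ => f p.1 p.2) (S ×ˢ uIcc a b))
    (hd : ∀ t ∈ uIcc a b, DifferentiableOn ℂ (f · t) S) (hz : z ∈ S)
    (hf' : ∀ t ∈ uIcc a b, HasDerivAt (f · t) (f' t) z) :
    HasDerivAt (fun z => ∫ t in a..b, f z t) (∫ t in a..b, f' t) z := by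
  have h := (hasFDerivAt_intervalIntegral hS hf hd hz).hasDerivAt
  rw [ContinuousLinearMap.intervalIntegral_apply
    (continuousOn_fderiv_param hS isCompact_uIcc hf hd hz).intervalIntegrable] at h
  exact h.congr_deriv (intervalIntegral.integral_congr fun t ht => (hf' t ht).deriv)

theorem hasDerivAt_smul_integral_ray {f : ℂ → F} {S : Set ℂ} (hS : IsOpen S)
    (hstar : ∀ τ ∈ uIcc (0 : ℝ) 1, ∀ w ∈ S, ↑τ * w ∈ S) (hf : DifferentiableOn ℂ f S) {w : ℂ}
    (hw : w ∈ S) : HasDerivAt (fun w : ℂ => w • ∫ τ in (0 : ℝ)..1, f (τ * w)) (f w) w := by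
  have hray : MapsTo (fun τ : ℝ => ↑τ * w) (uIcc 0 1) S := fun τ hτ => hstar τ hτ w hw
  have hline : ContinuousOn (fun τ : ℝ => ↑τ * w) (uIcc 0 1) := by fun_prop
  have hfi : IntervalIntegrable (fun τ : ℝ => f (τ * w)) MeasureTheory.volume 0 1 :=
    (hf.continuousOn.comp hline hray).intervalIntegrable
  have hdfi : IntervalIntegrable (fun τ : ℝ => (τ : ℂ) • w • deriv f (τ * w))
      MeasureTheory.volume 0 1 :=
    ContinuousOn.intervalIntegrable (.smul (by fun_prop)
      (.const_smul ((hf.deriv hS).continuousOn.comp hline hray) w))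
  have hftc : ∫ τ in (0 : ℝ)..1, (f (τ * w) + (τ : ℂ) • w • deriv f (τ * w)) = f w := by
    rw [intervalIntegral.integral_eq_sub_of_hasDerivAt (f := fun τ : ℝ => (τ : ℂ) • f (τ * w))
      (fun τ hτ => ?_) (hfi.add hdfi)]
    · simp
    have hτ' : HasDerivAt (fun τ : ℝ => (τ : ℂ)) 1 τ := Complex.ofRealCLM.hasDerivAt
    have hfd := (hf.differentiableAt (hS.mem_nhds (hray hτ))).hasDerivAt
    exact (hτ'.smul (hfd.scomp τ (hτ'.mul_const w))).congr_deriv (by simp [add_comm])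
  have hint : HasDerivAt (fun w => ∫ τ in (0 : ℝ)..1, f (τ * w))
      (∫ τ in (0 : ℝ)..1, (τ : ℂ) • deriv f (τ * w)) w := by
    refine hasDerivAt_intervalIntegral (f := fun w τ => f (τ * w)) hS
      (hf.continuousOn.comp (by fun_prop) fun p hp => hstar p.2 hp.2 p.1 hp.1)
      (fun τ hτ => hf.comp (by fun_prop) (hstar τ hτ)) hw fun τ hτ => ?_
    simpa [Function.comp_def] using
      (hf.differentiableAt (hS.mem_nhds (hray hτ))).hasDerivAt.scomp w
      ((hasDerivAt_id w).const_mul (τ : ℂ))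
  refine ((hasDerivAt_id w).smul hint).congr_deriv ?_
  rw [← hftc, intervalIntegral.integral_add hfi hdfi, add_comm, one_smul, id,
    ← intervalIntegral.integral_smul]
  simp only [smul_comm w]

/-- The primitive of `f` in its second variable that vanishes on `{w = 0}`. -/
def sndPrimitive (f : ℂ × ℂ → F) (x : ℂ × ℂ) : F :=
  x.2 • ∫ τ in (0 : ℝ)..1, f (x.1, τ * x.2)

/-- The Hermitian dual `(z, w) ↦ star (f (star w, star z))`. It is the holomorphic extension from
the diagonal `w = star z` of the complex conjugate of `f`. -/
def dagger {V : Type*} [Star V] (f : ℂ × ℂ → V) (x : ℂ × ℂ) : V :=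
  star (f (star x.swap))

/-- An open set of `ℂ × ℂ` that is stable under `(z, w) ↦ (star w, star z)` and star-shaped in each
variable, on which Goursat problems with data on the axes are posed. -/
structure IsGoursatDomain (W : Set (ℂ × ℂ)) : Prop where
  isOpen : IsOpen W
  star_swap_mem : ∀ x ∈ W, star x.swap ∈ W
  mul_snd_mem : ∀ x ∈ W, ∀ τ ∈ Icc (0 : ℝ) 1, (x.1, τ * x.2) ∈ W

namespace IsGoursatDomain

variable {W : Set (ℂ × ℂ)}

theorem differentiableOn_sndPrimitive (hW : IsGoursatDomain W) {f : ℂ × ℂ → F}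
    (hf : DifferentiableOn ℂ f W) : DifferentiableOn ℂ (sndPrimitive f) W := by
  have hmem : ∀ τ ∈ uIcc (0 : ℝ) 1, ∀ x ∈ W, (x.1, τ * x.2) ∈ W := fun τ hτ x hx =>
    hW.mul_snd_mem x hx τ (by rwa [uIcc_of_le zero_le_one] at hτ)
  refine differentiableOn_snd.smul (differentiableOn_intervalIntegral hW.isOpen
    (hf.continuousOn.comp (g := f) (f := fun p : (ℂ × ℂ) × ℝ => (p.1.1, (p.2 : ℂ) * p.1.2))
      (by fun_prop) fun p hp => hmem p.2 hp.2 p.1 hp.1)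
    fun τ hτ => hf.comp (g := f) (f := fun x : ℂ × ℂ => (x.1, (τ : ℂ) * x.2)) (by fun_prop)
      fun x hx => hmem τ hτ x hx)

theorem hasDerivAt_sndPrimitive_snd (hW : IsGoursatDomain W) {f : ℂ × ℂ → F}
    (hf : DifferentiableOn ℂ f W) {x : ℂ × ℂ} (hx : x ∈ W) :
    HasDerivAt (fun w => sndPrimitive f (x.1, w)) (f x) x.2 := by
  have hslice : Continuous fun w : ℂ => (x.1, w) := by fun_prop
  refine hasDerivAt_smul_integral_ray (f := fun w => f (x.1, w)) (hW.isOpen.preimage hslice)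
    (fun τ hτ w hw => hW.mul_snd_mem _ hw τ (by rwa [uIcc_of_le zero_le_one] at hτ))
    (hf.comp (g := f) (f := fun w : ℂ => (x.1, w)) (by fun_prop) fun _ h => h) hx

theorem hasDerivAt_sndPrimitive_fst (hW : IsGoursatDomain W) {f g : ℂ × ℂ → F}
    (hf : DifferentiableOn ℂ f W) (hg : ∀ x ∈ W, HasDerivAt (fun z => f (z, x.2)) (g x) x.1)
    {x : ℂ × ℂ} (hx : x ∈ W) :
    HasDerivAt (fun z => sndPrimitive f (z, x.2)) (sndPrimitive g x) x.1 := by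
  have hmem : ∀ τ ∈ uIcc (0 : ℝ) 1, ∀ z, (z, x.2) ∈ W → (z, τ * x.2) ∈ W := fun τ hτ z hz =>
    hW.mul_snd_mem _ hz τ (by rwa [uIcc_of_le zero_le_one] at hτ)
  have hslice : Continuous fun z : ℂ => (z, x.2) := by fun_prop
  refine (hasDerivAt_intervalIntegral (f := fun z τ => f (z, τ * x.2)) (hW.isOpen.preimage hslice)
    (hf.continuousOn.comp (g := f) (f := fun p : ℂ × ℝ => (p.1, (p.2 : ℂ) * x.2)) (by fun_prop)
      fun p hp => hmem p.2 hp.2 p.1 hp.1)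
    (fun τ hτ => hf.comp (g := f) (f := fun z : ℂ => (z, (τ : ℂ) * x.2)) (by fun_prop)
      fun z hz => hmem τ hτ z hz)
    hx fun τ hτ => ?_).const_smul x.2
  exact hg _ (hmem τ hτ x.1 hx)

end IsGoursatDomain

end Primitive

section PrimitiveNorm

variable {F : Type*} [NormedAddCommGroup F] [NormedSpace ℂ F]

theorem norm_sndPrimitive_le {f : ℂ × ℂ → F} {g g' : ℝ → ℝ} (hg : ∀ t, HasDerivAt g (g' t) t)
    (hg' : Continuous g') {x : ℂ × ℂ}
    (h : ∀ τ ∈ Icc (0 : ℝ) 1, ‖f (x.1, τ * x.2)‖ ≤ g' (τ * ‖x.2‖)) :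
    ‖sndPrimitive f x‖ ≤ g ‖x.2‖ - g 0 := by
  have hscale : ‖x.2‖ * ∫ τ in (0 : ℝ)..1, g' (τ * ‖x.2‖) = g ‖x.2‖ - g 0 := by
    rw [← smul_eq_mul, intervalIntegral.smul_integral_comp_mul_right, zero_mul, one_mul]
    exact intervalIntegral.integral_eq_sub_of_hasDerivAt (fun t _ => hg t)
      (hg'.intervalIntegrable _ _)
  rw [sndPrimitive, norm_smul, ← hscale]
  gcongr
  refine intervalIntegral.norm_integral_le_of_norm_le zero_le_one
    (.of_forall fun τ hτ => h τ (Ioc_subset_Icc_self hτ)) ?_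
  exact (hg'.comp (continuous_id.mul continuous_const)).intervalIntegrable _ _

theorem IsGoursatDomain.sndPrimitive_sub {W : Set (ℂ × ℂ)} (hW : IsGoursatDomain W)
    {f g : ℂ × ℂ → F} (hf : ContinuousOn f W) (hg : ContinuousOn g W) {x : ℂ × ℂ} (hx : x ∈ W) :
    sndPrimitive (f - g) x = sndPrimitive f x - sndPrimitive g x := by
  have hint : ∀ h : ℂ × ℂ → F, ContinuousOn h W →
      IntervalIntegrable (fun τ : ℝ => h (x.1, τ * x.2)) MeasureTheory.volume 0 1 := fun h hh =>
    (hh.comp (f := fun τ : ℝ => (x.1, (τ : ℂ) * x.2)) (by fun_prop) fun τ hτ =>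
      hW.mul_snd_mem x hx τ (by rwa [uIcc_of_le zero_le_one] at hτ)).intervalIntegrable
  simp only [sndPrimitive, Pi.sub_apply]
  rw [intervalIntegral.integral_sub (hint f hf) (hint g hg), smul_sub]

end PrimitiveNorm

section Dagger

theorem norm_dagger {V : Type*} [SeminormedAddCommGroup V] [StarAddMonoid V] [NormedStarGroup V]
    (f : ℂ × ℂ → V) (x : ℂ × ℂ) : ‖dagger f x‖ = ‖f (star x.swap)‖ := norm_star _

variable {V : Type*} [NormedAddCommGroup V] [NormedSpace ℂ V] [StarAddMonoid V] [StarModule ℂ V]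
  [NormedStarGroup V]

theorem IsGoursatDomain.differentiableOn_dagger {W : Set (ℂ × ℂ)} (hW : IsGoursatDomain W)
    {f : ℂ × ℂ → V} (hf : DifferentiableOn ℂ f W) : DifferentiableOn ℂ (dagger f) W := by
  intro x hx
  have h := (hf.differentiableAt (hW.isOpen.mem_nhds (hW.star_swap_mem x hx))).star_star
  rw [star_star] at h
  exact (h.comp x (f := Prod.swap) (by unfold Prod.swap; fun_prop)).differentiableWithinAt

theorem hasDerivAt_dagger_fst {f : ℂ × ℂ → V} {f' : V} {x : ℂ × ℂ}
    (hf : HasDerivAt (fun w => f (star x.2, w)) f' (star x.1)) :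
    HasDerivAt (fun z => dagger f (z, x.2)) (star f') x.1 := by
  have h := hf.hasFDerivAt.star_star.hasDerivAt
  rw [star_star] at h
  exact h.congr_deriv (by simp)

theorem hasDerivAt_dagger_snd {f : ℂ × ℂ → V} {f' : V} {x : ℂ × ℂ}
    (hf : HasDerivAt (fun z => f (z, star x.1)) f' (star x.2)) :
    HasDerivAt (fun w => dagger f (x.1, w)) (star f') x.2 := by
  have h := hf.hasFDerivAt.star_star.hasDerivAt
  rw [star_star] at h
  exact h.congr_deriv (by simp)

end Dagger

section Goursat

/-- The data of the Goursat problem `∂p/∂w = E + B(D, p†) + B(p, D†) + B(p, p†)` with `p = 0` on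
`{w = 0}`, where `p†` is `dagger p`. All bounds are in terms of a positive radial weight `a`, with
primitive `A`; `ε` measures the size of the error term `E`. -/
structure GoursatProblem (V : Type*) [NormedAddCommGroup V] [NormedSpace ℂ V] [StarAddMonoid V]
    where
  (W : Set (ℂ × ℂ)) (B : V →L[ℂ] V →L[ℂ] V) (D E : ℂ × ℂ → V) (a A : ℝ → ℝ) (β C ε : ℝ)
  isGoursatDomain : IsGoursatDomain W
  β_pos : 0 < β
  norm_B_le : ∀ x y, ‖B x y‖ ≤ β * ‖x‖ * ‖y‖
  star_B : ∀ x y, star (B x y) = B (star y) (star x)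
  differentiableOn_D : DifferentiableOn ℂ D W
  differentiableOn_E : DifferentiableOn ℂ E W
  dagger_E : ∀ x ∈ W, dagger E x = E x
  a_pos : ∀ t, 0 < a t
  continuous_a : Continuous a
  hasDerivAt_A : ∀ t, HasDerivAt A (a t) t
  A_nonneg : ∀ t, 0 ≤ A t
  A_le : ∀ x ∈ W, A ‖x.1‖ ≤ C
  norm_D_le : ∀ x ∈ W, ‖D x‖ ≤ a ‖x.1‖
  norm_E_le : ∀ x ∈ W, ‖E x‖ ≤ 4 * β * ε * (a ‖x.1‖ * a ‖x.2‖)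
  ε_nonneg : 0 ≤ ε
  ε_le : ε * Real.exp (16 * β * C) ≤ 1

namespace GoursatProblem

variable {V : Type*} [NormedAddCommGroup V] [NormedSpace ℂ V] [StarAddMonoid V]

/-- The right-hand side of the Goursat problem, as a function of the unknown. -/
def rhs (𝒢 : GoursatProblem V) (p : ℂ × ℂ → V) (x : ℂ × ℂ) : V :=
  𝒢.E x + 𝒢.B (𝒢.D x) (dagger p x) + 𝒢.B (p x) (dagger 𝒢.D x) + 𝒢.B (p x) (dagger p x)

/-- The weight in whose supremum norm `p ↦ sndPrimitive (rhs p)` is contracting. -/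
def weight (𝒢 : GoursatProblem V) (x : ℂ × ℂ) : ℝ :=
  Real.exp (8 * 𝒢.β * (𝒢.A ‖x.1‖ + 𝒢.A ‖x.2‖))

variable (𝒢 : GoursatProblem V)

theorem continuous_weight : Continuous 𝒢.weight := by
  have hA : Continuous 𝒢.A := Differentiable.continuous fun t => (𝒢.hasDerivAt_A t).differentiableAt
  unfold weight
  fun_prop

theorem weight_star_swap (x : ℂ × ℂ) : 𝒢.weight (star x.swap) = 𝒢.weight x := by
  simp [weight, add_comm]

theorem one_le_weight (x : ℂ × ℂ) : 1 ≤ 𝒢.weight x :=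
  Real.one_le_exp (mul_nonneg (by linarith [𝒢.β_pos])
    (add_nonneg (𝒢.A_nonneg _) (𝒢.A_nonneg _)))

theorem weight_pos (x : ℂ × ℂ) : 0 < 𝒢.weight x := Real.exp_pos _

variable {𝒢} {x : ℂ × ℂ}

theorem weight_le (hx : x ∈ 𝒢.W) : 𝒢.weight x ≤ Real.exp (16 * 𝒢.β * 𝒢.C) := by
  have h1 := 𝒢.A_le x hx
  have h2 : 𝒢.A ‖x.2‖ ≤ 𝒢.C := by
    simpa using 𝒢.A_le _ (𝒢.isGoursatDomain.star_swap_mem x hx)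
  have := 𝒢.β_pos
  refine Real.exp_le_exp.2 ?_
  calc 8 * 𝒢.β * (𝒢.A ‖x.1‖ + 𝒢.A ‖x.2‖) ≤ 8 * 𝒢.β * (𝒢.C + 𝒢.C) := by gcongr
    _ = 16 * 𝒢.β * 𝒢.C := by ring

theorem ε_mul_weight_le_one (hx : x ∈ 𝒢.W) : 𝒢.ε * 𝒢.weight x ≤ 1 :=
  (mul_le_mul_of_nonneg_left (weight_le hx) 𝒢.ε_nonneg).trans 𝒢.ε_le

theorem norm_sndPrimitive_le_weight {f : ℂ × ℂ → V} {c : ℝ} (hx : x ∈ 𝒢.W)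
    (h : ∀ y ∈ 𝒢.W, y.1 = x.1 → ‖f y‖ ≤ c * 𝒢.a ‖y.2‖ * 𝒢.weight y) :
    ‖sndPrimitive f x‖ ≤ c / (8 * 𝒢.β) * 𝒢.weight x := by
  have hβ := 𝒢.β_pos
  have hA : Continuous 𝒢.A := Differentiable.continuous fun t => (𝒢.hasDerivAt_A t).differentiableAt
  have ha := 𝒢.continuous_a
  have hc : 0 ≤ c := by
    have := (norm_nonneg _).trans (h x hx rfl)
    exact nonneg_of_mul_nonneg_left (by rwa [mul_assoc] at this)
      (mul_pos (𝒢.a_pos _) (𝒢.weight_pos x))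
  set g : ℝ → ℝ := fun t =>
    c / (8 * 𝒢.β) * Real.exp (8 * 𝒢.β * (𝒢.A ‖x.1‖ + 𝒢.A t))
  have hderiv : ∀ t, HasDerivAt g
      (c * 𝒢.a t * Real.exp (8 * 𝒢.β * (𝒢.A ‖x.1‖ + 𝒢.A t))) t := fun t =>
    ((((𝒢.hasDerivAt_A t).const_add _).const_mul (8 * 𝒢.β)).exp.const_mul _).congr_deriv (by
      field_simp)
  have hle := norm_sndPrimitive_le hderiv (by fun_prop) (x := x) fun τ hτ => by
    simpa [weight, abs_of_nonneg hτ.1] using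
      h _ (𝒢.isGoursatDomain.mul_snd_mem x hx τ hτ) rfl
  exact hle.trans (sub_le_self _ (by positivity))

theorem rhs_sub_rhs (f g : ℂ × ℂ → V) (x : ℂ × ℂ) :
    𝒢.rhs f x - 𝒢.rhs g x = 𝒢.B (𝒢.D x) (dagger (f - g) x) + 𝒢.B ((f - g) x) (dagger 𝒢.D x) +
      𝒢.B (f x) (dagger (f - g) x) + 𝒢.B ((f - g) x) (dagger g x) := by
  have hsub : dagger (f - g) x = dagger f x - dagger g x := star_sub _ _
  simp only [rhs, hsub, Pi.sub_apply, map_sub, _root_.sub_apply]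
  abel

theorem dagger_rhs (f : ℂ × ℂ → V) (hx : x ∈ 𝒢.W) : dagger (𝒢.rhs f) x = 𝒢.rhs f x := by
  have hd : ∀ g : ℂ × ℂ → V, star (g (star x.swap)) = dagger g x := fun _ => rfl
  have hs : ∀ g : ℂ × ℂ → V, dagger g (star x.swap) = star (g x) := fun g =>
    congrArg (fun y => star (g y)) (star_star x)
  have hE := 𝒢.dagger_E x hx
  rw [dagger] at hE ⊢
  simp only [rhs, star_add, 𝒢.star_B, hE, hs, hd, star_star]
  abel

theorem differentiableOn_rhs {f : ℂ × ℂ → V} (hf : DifferentiableOn ℂ f 𝒢.W)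
    (hf' : DifferentiableOn ℂ (dagger f) 𝒢.W) (hD : DifferentiableOn ℂ (dagger 𝒢.D) 𝒢.W) :
    DifferentiableOn ℂ (𝒢.rhs f) 𝒢.W := by
  have hD' := 𝒢.differentiableOn_D
  have hE := 𝒢.differentiableOn_E
  unfold rhs
  fun_prop

theorem norm_rhs_zero_le (hx : x ∈ 𝒢.W) :
    ‖𝒢.rhs 0 x‖ ≤ 4 * 𝒢.β * 𝒢.ε * 𝒢.a ‖x.1‖ * 𝒢.a ‖x.2‖ * 𝒢.weight x := by
  have hE := 𝒢.norm_E_le x hx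
  have h0 : 𝒢.rhs 0 x = 𝒢.E x := by simp [rhs, dagger]
  rw [h0]
  calc _ ≤ _ := hE
    _ ≤ _ := le_mul_of_one_le_right ((norm_nonneg _).trans hE) (𝒢.one_le_weight x)
    _ = _ := by ring

variable [NormedStarGroup V]

theorem norm_dagger_le {f : ℂ × ℂ → V} {δ : ℝ}
    (hf : ∀ x ∈ 𝒢.W, ‖f x‖ ≤ δ * (𝒢.a ‖x.1‖ * 𝒢.weight x)) (hx : x ∈ 𝒢.W) :
    ‖dagger f x‖ ≤ δ * (𝒢.a ‖x.2‖ * 𝒢.weight x) := by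
  simpa [norm_dagger, weight_star_swap] using hf _ (𝒢.isGoursatDomain.star_swap_mem x hx)

theorem norm_dagger_D_le (hx : x ∈ 𝒢.W) : ‖dagger 𝒢.D x‖ ≤ 𝒢.a ‖x.2‖ := by
  simpa [norm_dagger] using 𝒢.norm_D_le _ (𝒢.isGoursatDomain.star_swap_mem x hx)

theorem norm_rhs_sub_rhs_le {f g : ℂ × ℂ → V} {δ : ℝ}
    (hf : ∀ x ∈ 𝒢.W, ‖f x‖ ≤ 𝒢.ε * (𝒢.a ‖x.1‖ * 𝒢.weight x))
    (hg : ∀ x ∈ 𝒢.W, ‖g x‖ ≤ 𝒢.ε * (𝒢.a ‖x.1‖ * 𝒢.weight x))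
    (hfg : ∀ x ∈ 𝒢.W, ‖f x - g x‖ ≤ δ * (𝒢.a ‖x.1‖ * 𝒢.weight x)) (hx : x ∈ 𝒢.W) :
    ‖𝒢.rhs f x - 𝒢.rhs g x‖ ≤ 4 * 𝒢.β * δ * 𝒢.a ‖x.1‖ * 𝒢.a ‖x.2‖ * 𝒢.weight x := by
  have hβ := 𝒢.β_pos
  have ha := 𝒢.a_pos
  have hw := 𝒢.weight_pos x
  have hδ : 0 ≤ δ := by
    have := ((norm_nonneg _).trans (hfg x hx))
    exact nonneg_of_mul_nonneg_left this (mul_pos (ha _) hw)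
  have hB : ∀ {y z : V} {r s : ℝ}, ‖y‖ ≤ r → ‖z‖ ≤ s → 0 ≤ r → ‖𝒢.B y z‖ ≤ 𝒢.β * r * s :=
    fun hy hz hr => (𝒢.norm_B_le _ _).trans (by gcongr)
  have hd := norm_dagger_le (f := f - g) hfg hx
  have h1 := hB (𝒢.norm_D_le x hx) hd (ha _).le
  have h2 := hB (hfg x hx) (norm_dagger_D_le hx) (by have := ha ‖x.1‖; positivity)
  have h3 := hB (hf x hx) hd ((norm_nonneg _).trans (hf x hx))
  have h4 := hB (hfg x hx) (norm_dagger_le hg hx) ((norm_nonneg _).trans (hfg x hx))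
  rw [rhs_sub_rhs]
  calc _ ≤ _ := norm_add₄_le
    _ ≤ _ := add_le_add (add_le_add (add_le_add h1 h2) h3) h4
    _ = 2 * 𝒢.β * δ * 𝒢.a ‖x.1‖ * 𝒢.a ‖x.2‖ * 𝒢.weight x * (1 + 𝒢.ε * 𝒢.weight x) := by ring
    _ ≤ 2 * 𝒢.β * δ * 𝒢.a ‖x.1‖ * 𝒢.a ‖x.2‖ * 𝒢.weight x * (1 + 1) := by
      gcongr
      · have := ha ‖x.1‖
        have := ha ‖x.2‖
        positivity
      · exact ε_mul_weight_le_one hx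
    _ = _ := by ring

variable [CompleteSpace V] [StarModule ℂ V] (𝒢)

theorem exists_eq_sndPrimitive_rhs :
    ∃ p : ℂ × ℂ → V, DifferentiableOn ℂ p 𝒢.W ∧ DifferentiableOn ℂ (𝒢.rhs p) 𝒢.W ∧
      (∀ x ∈ 𝒢.W, ‖p x‖ ≤ 𝒢.ε * (𝒢.a ‖x.1‖ * 𝒢.weight x)) ∧
      ∀ x ∈ 𝒢.W, sndPrimitive (𝒢.rhs p) x = p x := by
  have hW := 𝒢.isGoursatDomain
  have hβ := 𝒢.β_pos
  have hweight : Continuous fun x : ℂ × ℂ => 𝒢.a ‖x.1‖ * 𝒢.weight x := by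
    have := 𝒢.continuous_a
    have := 𝒢.continuous_weight
    fun_prop
  have hrhs : ∀ f, DifferentiableOn ℂ f 𝒢.W → DifferentiableOn ℂ (𝒢.rhs f) 𝒢.W := fun f hf =>
    differentiableOn_rhs hf (hW.differentiableOn_dagger hf)
      (hW.differentiableOn_dagger 𝒢.differentiableOn_D)
  obtain ⟨p, hp, hbound, hfix⟩ := exists_differentiableOn_fixedPoint hW.isOpen hweight
    (T := fun f => sndPrimitive (𝒢.rhs f)) (ε := 𝒢.ε)
    (fun f hf => hW.differentiableOn_sndPrimitive (hrhs f hf))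
    (fun x hx => (norm_sndPrimitive_le_weight hx fun y hy hyx =>
      hyx ▸ norm_rhs_zero_le hy).trans_eq (by field_simp; ring))
    fun f g δ hf hg hfε hgε hfg x hx => by
      rw [← hW.sndPrimitive_sub (hrhs f hf).continuousOn (hrhs g hg).continuousOn hx]
      exact (norm_sndPrimitive_le_weight hx fun y hy hyx =>
        hyx ▸ norm_rhs_sub_rhs_le hfε hgε hfg hy).trans_eq (by field_simp; ring)
  exact ⟨p, hp, hrhs p hp, hbound, hfix⟩

theorem exists_solution : ∃ v p : ℂ × ℂ → V,
    DifferentiableOn ℂ v 𝒢.W ∧ DifferentiableOn ℂ p 𝒢.W ∧ ∀ x ∈ 𝒢.W,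
      HasDerivAt (fun z => v (z, x.2)) (p x) x.1 ∧
      HasDerivAt (fun w => v (x.1, w)) (dagger p x) x.2 ∧
      HasDerivAt (fun w => p (x.1, w)) (𝒢.rhs p x) x.2 ∧
      ‖v x‖ ≤ 𝒢.ε * Real.exp (16 * 𝒢.β * 𝒢.C) / (8 * 𝒢.β) := by
  have hW := 𝒢.isGoursatDomain
  have hβ := 𝒢.β_pos
  obtain ⟨p, hp, hrhs, hbound, hfix⟩ := 𝒢.exists_eq_sndPrimitive_rhs
  have hp' := hW.differentiableOn_dagger hp
  have hpw : ∀ x ∈ 𝒢.W, HasDerivAt (fun w => p (x.1, w)) (𝒢.rhs p x) x.2 := fun x hx => by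
    refine (hW.hasDerivAt_sndPrimitive_snd hrhs hx).congr_of_eventuallyEq ?_
    have hslice : ContinuousAt (fun w : ℂ => (x.1, w)) x.2 := by fun_prop
    filter_upwards [hslice.preimage_mem_nhds (hW.isOpen.mem_nhds hx)] with w hw
    exact (hfix _ hw).symm
  have hpz : ∀ x ∈ 𝒢.W, HasDerivAt (fun z => dagger p (z, x.2)) (𝒢.rhs p x) x.1 :=
    fun x hx => (hasDerivAt_dagger_fst (hpw _ (hW.star_swap_mem x hx))).congr_deriv
      (dagger_rhs p hx)
  refine ⟨sndPrimitive (dagger p), p, hW.differentiableOn_sndPrimitive hp', hp, fun x hx =>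
    ⟨hfix x hx ▸ hW.hasDerivAt_sndPrimitive_fst hp' hpz hx, hW.hasDerivAt_sndPrimitive_snd hp' hx,
      hpw x hx, ?_⟩⟩
  refine (norm_sndPrimitive_le_weight hx fun y hy _ =>
    (norm_dagger_le hbound hy).trans_eq (mul_assoc _ _ _).symm).trans ?_
  rw [mul_div_right_comm]
  have := 𝒢.ε_nonneg
  gcongr
  exact weight_le hx

end GoursatProblem

end Goursat

section CrossProduct

variable (a b : R3)

theorem inner_R3 : inner ℝ a b = a 0 * b 0 + a 1 * b 1 + a 2 * b 2 := by
  rw [PiLp.inner_apply, Fin.sum_univ_three]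
  simp only [RCLike.inner_apply', conj_trivial]

theorem cross_apply_zero : cross a b 0 = a 1 * b 2 - a 2 * b 1 := rfl

theorem cross_apply_one : cross a b 1 = a 2 * b 0 - a 0 * b 2 := rfl

theorem cross_apply_two : cross a b 2 = a 0 * b 1 - a 1 * b 0 := rfl

variable {a b}

theorem ext_R3 (h0 : a 0 = b 0) (h1 : a 1 = b 1) (h2 : a 2 = b 2) : a = b := by
  ext i
  fin_cases i
  exacts [h0, h1, h2]

end CrossProduct

section HSystem
open Matrix

/-- The cross product of `ℂ³` normalized as `-i x × y`, so that it is compatible with complex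
conjugation in the sense of `star_hermitianCross` and `Δu = 2 u_x ∧ u_y` reads
`∂Y/∂z∂w = hermitianCross (∂Y/∂z) (∂Y/∂w)` for the complexification `Y` of `u`. -/
def hermitianCross : (Fin 3 → ℂ) →L[ℂ] (Fin 3 → ℂ) →L[ℂ] (Fin 3 → ℂ) :=
  (-Complex.I • crossProduct (R := ℂ)).mkContinuous₂ 2 fun x y => by
    have hprod : ∀ i j, ‖x i * y j‖ ≤ ‖x‖ * ‖y‖ := fun i j => by
      rw [norm_mul]
      gcongr <;> exact norm_le_pi_norm _ _
    refine (pi_norm_le_iff_of_nonneg (by positivity)).2 fun i => ?_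
    fin_cases i <;>
      · simp only [LinearMap.smul_apply, cross_apply, Pi.smul_apply, norm_smul, norm_neg,
          Complex.norm_I, one_mul]
        refine (norm_sub_le _ _).trans ?_
        rw [mul_assoc, two_mul]
        exact add_le_add (hprod _ _) (hprod _ _)

theorem hermitianCross_apply (x y : Fin 3 → ℂ) : hermitianCross x y = -Complex.I • x ⨯₃ y := rfl

theorem norm_hermitianCross_le (x y : Fin 3 → ℂ) : ‖hermitianCross x y‖ ≤ 2 * ‖x‖ * ‖y‖ :=
  hermitianCross.le_of_opNorm₂_le_of_le (LinearMap.mkContinuous₂_norm_le _ zero_le_two _)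
    le_rfl le_rfl

theorem star_hermitianCross (x y : Fin 3 → ℂ) :
    star (hermitianCross x y) = hermitianCross (star y) (star x) := by
  ext i
  fin_cases i <;> simp [hermitianCross_apply, cross_apply] <;> ring

/-- The real part `ℂ³ → ℝ³`. -/
def reVec : (Fin 3 → ℂ) →L[ℝ] R3 :=
  (EuclideanSpace.equiv (Fin 3) ℝ).symm.toContinuousLinearMap ∘L
    .pi fun i => Complex.reCLM ∘L .proj i

@[simp]
theorem reVec_apply (x : Fin 3 → ℂ) (i : Fin 3) : reVec x i = (x i).re := rfl

theorem two_smul_cross_reVec (p : Fin 3 → ℂ) :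
    (2 : ℝ) • cross (reVec (p + star p)) (reVec (Complex.I • (p - star p))) =
      reVec ((4 : ℂ) • hermitianCross p (star p)) := by
  ext i
  fin_cases i <;> simp [hermitianCross_apply, cross_apply, cross, e3] <;> ring

theorem norm_reVec_le (x : Fin 3 → ℂ) : ‖reVec x‖ ≤ 2 * ‖x‖ := by
  have hsq : ∀ i, (x i).re ^ 2 ≤ ‖x‖ ^ 2 := fun i =>
    sq_le_sq.2 (((Complex.abs_re_le_norm _).trans (norm_le_pi_norm x i)).trans (le_abs_self _))
  rw [← sq_le_sq₀ (norm_nonneg _) (by positivity), EuclideanSpace.norm_sq_eq, Fin.sum_univ_three]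
  simp only [reVec_apply, Real.norm_eq_abs, sq_abs]
  nlinarith [hsq 0, hsq 1, hsq 2, sq_nonneg ‖x‖]

/-- The restriction of `F` to the diagonal `w = star z` of `ℂ × ℂ`, followed by the real part. -/
def realDiag (F : ℂ × ℂ → Fin 3 → ℂ) (z : ℂ) : R3 := reVec (F (z, star z))

variable {F : ℂ × ℂ → Fin 3 → ℂ} {z : ℂ} {a b : Fin 3 → ℂ}

theorem fderiv_realDiag (hF : DifferentiableAt ℂ F (z, star z))
    (ha : HasDerivAt (fun t => F (t, star z)) a z)
    (hb : HasDerivAt (fun w => F (z, w)) b (star z)) (h : ℂ) :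
    fderiv ℝ (realDiag F) z h = reVec (h • a + star h • b) := by
  have hdiag : HasFDerivAt (fun t : ℂ => (t, star t))
      ((ContinuousLinearMap.id ℝ ℂ).prod (Complex.conjCLE : ℂ →L[ℝ] ℂ)) z :=
    (hasFDerivAt_id z).prodMk (Complex.conjCLE : ℂ →L[ℝ] ℂ).hasFDerivAt
  have hcomp := reVec.hasFDerivAt.comp z
    ((hF.hasFDerivAt.restrictScalars ℝ).comp (f := fun t : ℂ => (t, star t)) z hdiag)
  have hfst : fderiv ℂ F (z, star z) (1, 0) = a :=
    (hF.hasFDerivAt.comp_hasDerivAt z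
      ((hasDerivAt_id z).prodMk (hasDerivAt_const z (star z)))).unique ha
  have hsnd : fderiv ℂ F (z, star z) (0, 1) = b :=
    (hF.hasFDerivAt.comp_hasDerivAt (star z)
      ((hasDerivAt_const (star z) z).prodMk (hasDerivAt_id (star z)))).unique hb
  have hsplit : ((h, star h) : ℂ × ℂ) = h • (1, 0) + star h • (0, 1) := by simp
  have hval : fderiv ℝ (realDiag F) z h = reVec (fderiv ℂ F (z, star z) (h, star h)) := by
    rw [show realDiag F = reVec ∘ F ∘ fun t => (t, star t) from rfl, hcomp.fderiv]
    rfl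
  rw [hval, hsplit, map_add, map_smul, map_smul, hfst, hsnd]

theorem pdx_realDiag (hF : DifferentiableAt ℂ F (z, star z))
    (ha : HasDerivAt (fun t => F (t, star z)) a z)
    (hb : HasDerivAt (fun w => F (z, w)) b (star z)) : pdx (realDiag F) z = reVec (a + b) := by
  rw [pdx, fderiv_realDiag hF ha hb, star_one, one_smul, one_smul]

theorem pdy_realDiag (hF : DifferentiableAt ℂ F (z, star z))
    (ha : HasDerivAt (fun t => F (t, star z)) a z)
    (hb : HasDerivAt (fun w => F (z, w)) b (star z)) :
    pdy (realDiag F) z = reVec (Complex.I • (a - b)) := by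
  rw [pdy, fderiv_realDiag hF ha hb, Complex.star_def, Complex.conj_I, neg_smul, smul_sub,
    sub_eq_add_neg]

theorem contDiffAt_realDiag {n : ℕ∞} (hF : ContDiffAt ℂ n F (z, star z)) :
    ContDiffAt ℝ n (realDiag F) z := by
  have hdiag : ContDiffAt ℝ n (fun t : ℂ => (t, star t)) z :=
    contDiffAt_id.prodMk (Complex.conjCLE : ℂ →L[ℝ] ℂ).contDiff.contDiffAt
  exact reVec.contDiff.contDiffAt.comp z
    ((hF.restrict_scalars ℝ).comp (f := fun t : ℂ => (t, star t)) z hdiag)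

variable {W : Set (ℂ × ℂ)} {Y p : ℂ × ℂ → Fin 3 → ℂ}

theorem dagger_hermitianCross_dagger (f : ℂ × ℂ → Fin 3 → ℂ) :
    dagger (fun x => hermitianCross (f x) (dagger f x)) =
      fun x => hermitianCross (f x) (dagger f x) := by
  ext1 x
  have hx : star (star x.swap).swap = x := star_star x
  rw [dagger, star_hermitianCross, dagger, star_star, hx]
  rfl

theorem differentiableOn_hermitianCross_dagger (hW : IsGoursatDomain W)
    {f : ℂ × ℂ → Fin 3 → ℂ} (hf : DifferentiableOn ℂ f W) :
    DifferentiableOn ℂ (fun x => hermitianCross (f x) (dagger f x)) W :=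
  (hermitianCross.differentiable.comp_differentiableOn hf).clm_apply (hW.differentiableOn_dagger hf)

theorem hasDerivAt_dagger_fst_of_eq_hermitianCross (hW : IsGoursatDomain W)
    (hpw : ∀ x ∈ W, HasDerivAt (fun w => p (x.1, w)) (hermitianCross (p x) (dagger p x)) x.2)
    {x : ℂ × ℂ} (hx : x ∈ W) :
    HasDerivAt (fun z => dagger p (z, x.2)) (hermitianCross (p x) (dagger p x)) x.1 :=
  (hasDerivAt_dagger_fst (hpw _ (hW.star_swap_mem x hx))).congr_deriv
    (congrFun (dagger_hermitianCross_dagger p) x)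

theorem lap_realDiag (hW : IsGoursatDomain W) (hY : DifferentiableOn ℂ Y W)
    (hp : DifferentiableOn ℂ p W)
    (hYz : ∀ x ∈ W, HasDerivAt (fun z => Y (z, x.2)) (p x) x.1)
    (hYw : ∀ x ∈ W, HasDerivAt (fun w => Y (x.1, w)) (dagger p x) x.2)
    (hpw : ∀ x ∈ W, HasDerivAt (fun w => p (x.1, w)) (hermitianCross (p x) (dagger p x)) x.2)
    (hz : (z, star z) ∈ W) :
    lap (realDiag Y) z = (2 : ℝ) • cross (pdx (realDiag Y) z) (pdy (realDiag Y) z) := by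
  have hdiff : ∀ {f : ℂ × ℂ → Fin 3 → ℂ} {t : ℂ}, DifferentiableOn ℂ f W → (t, star t) ∈ W →
      DifferentiableAt ℂ f (t, star t) := fun hf ht => hf.differentiableAt (hW.isOpen.mem_nhds ht)
  have hq := hW.differentiableOn_dagger hp
  have hpz : HasDerivAt (fun t => p (t, star z)) _ z :=
    ((hdiff hp hz).comp z (f := fun t => (t, star z)) (by fun_prop)).hasDerivAt
  have hqw : HasDerivAt (fun w => dagger p (z, w)) _ (star z) :=
    ((hdiff hq hz).comp (star z) (f := fun w => (z, w)) (by fun_prop)).hasDerivAt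
  have hqz := hasDerivAt_dagger_fst_of_eq_hermitianCross hW hpw hz
  have hnhds : ∀ᶠ t in 𝓝 z, (t, star t) ∈ W :=
    (hW.isOpen.preimage (continuous_id.prodMk continuous_star)).mem_nhds hz
  have hx : pdx (realDiag Y) =ᶠ[𝓝 z] realDiag (p + dagger p) := hnhds.mono fun t ht =>
    pdx_realDiag (hdiff hY ht) (hYz _ ht) (hYw _ ht)
  have hy : pdy (realDiag Y) =ᶠ[𝓝 z] realDiag (Complex.I • (p - dagger p)) := hnhds.mono fun t ht =>
    pdy_realDiag (hdiff hY ht) (hYz _ ht) (hYw _ ht)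
  have hxx := pdx_realDiag ((hdiff hp hz).add (hdiff hq hz)) (hpz.add hqz) ((hpw _ hz).add hqw)
  have hyy := pdy_realDiag (((hdiff hp hz).sub (hdiff hq hz)).const_smul Complex.I)
    ((hpz.sub hqz).const_smul Complex.I) (((hpw _ hz).sub hqw).const_smul Complex.I)
  have hdag : dagger p (z, star z) = star (p (z, star z)) := by
    rw [dagger, Prod.swap_prod_mk, Prod.star_def, star_star]
  rw [lap, pdx, hx.fderiv_eq, ← pdx, pdy, hy.fderiv_eq, ← pdy, hxx, hyy, hx.self_of_nhds,
    hy.self_of_nhds, realDiag, realDiag]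
  simp only [Pi.add_apply, Pi.smul_apply, Pi.sub_apply, hdag]
  rw [two_smul_cross_reVec, ← map_add]
  congr 1
  rw [← smul_sub, smul_smul, Complex.I_mul_I]
  module

end HSystem

section Frames

/-- Two orthonormal vectors `e, v` of `ℝ³`, completed by `f = v × e` to a positively oriented
orthonormal basis `e, f, v`. -/
structure Frame where
  (e v : R3)
  norm_e : ‖e‖ = 1
  norm_v : ‖v‖ = 1
  inner_e_v : inner ℝ e v = 0

theorem exists_frame {v : R3} (hv : ‖v‖ = 1) : ∃ F : Frame, F.v = v := by
  have hon : Orthonormal ℝ (({2} : Set (Fin 3)).domRestrict fun _ => v) :=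
    ⟨fun _ => hv, fun i j hij => absurd (Subsingleton.elim i j) hij⟩
  obtain ⟨b, hb⟩ := hon.exists_orthonormalBasis_extension_of_card_eq (by simp)
  have hb2 : b 2 = v := hb 2 rfl
  exact ⟨⟨b 0, v, b.norm_eq_one 0, hv, hb2 ▸ b.inner_eq_zero (by decide)⟩, rfl⟩

namespace Frame

variable (F : Frame)

/-- The third vector of the frame. -/
def f : R3 := cross F.v F.e

theorem dot_e_e : F.e 0 * F.e 0 + F.e 1 * F.e 1 + F.e 2 * F.e 2 = 1 := by
  rw [← inner_R3, real_inner_self_eq_norm_sq, F.norm_e, one_pow]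

theorem dot_v_v : F.v 0 * F.v 0 + F.v 1 * F.v 1 + F.v 2 * F.v 2 = 1 := by
  rw [← inner_R3, real_inner_self_eq_norm_sq, F.norm_v, one_pow]

theorem dot_e_v : F.e 0 * F.v 0 + F.e 1 * F.v 1 + F.e 2 * F.v 2 = 0 := by
  rw [← inner_R3, F.inner_e_v]

theorem cross_e_f : cross F.e F.f = F.v := by
  have he := F.dot_e_e
  have hev := F.dot_e_v
  refine ext_R3 ?_ ?_ ?_ <;> simp only [f, cross_apply_zero, cross_apply_one, cross_apply_two]
  · linear_combination F.v 0 * he - F.e 0 * hev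
  · linear_combination F.v 1 * he - F.e 1 * hev
  · linear_combination F.v 2 * he - F.e 2 * hev

theorem cross_f_v : cross F.f F.v = F.e := by
  have hv := F.dot_v_v
  have hev := F.dot_e_v
  refine ext_R3 ?_ ?_ ?_ <;> simp only [f, cross_apply_zero, cross_apply_one, cross_apply_two]
  · linear_combination F.e 0 * hv - F.v 0 * hev
  · linear_combination F.e 1 * hv - F.v 1 * hev
  · linear_combination F.e 2 * hv - F.v 2 * hev

theorem norm_f : ‖F.f‖ = 1 := by
  have he := F.dot_e_e
  have hv := F.dot_v_v
  have hev := F.dot_e_v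
  rw [← sq_eq_sq₀ (norm_nonneg _) zero_le_one, ← real_inner_self_eq_norm_sq, inner_R3]
  simp only [f, cross_apply_zero, cross_apply_one, cross_apply_two]
  linear_combination (F.e 0 * F.e 0 + F.e 1 * F.e 1 + F.e 2 * F.e 2) * hv + he -
    (F.e 0 * F.v 0 + F.e 1 * F.v 1 + F.e 2 * F.v 2) * hev

theorem orthonormal : Orthonormal ℝ ![F.e, F.f, F.v] := by
  have hef : inner ℝ F.e F.f = 0 := by
    simp only [inner_R3, f, cross_apply_zero, cross_apply_one, cross_apply_two]
    ring
  have hfv : inner ℝ F.f F.v = 0 := by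
    simp only [inner_R3, f, cross_apply_zero, cross_apply_one, cross_apply_two]
    ring
  refine ⟨fun i => ?_, fun i j hij => ?_⟩
  · fin_cases i <;> simp [F.norm_e, F.norm_f, F.norm_v]
  · fin_cases i <;> fin_cases j <;>
      first
      | exact absurd rfl hij
      | simp [hef, hfv, F.inner_e_v, real_inner_comm F.e F.f, real_inner_comm F.f F.v,
          real_inner_comm F.e F.v]

theorem norm_sq_combination (α β γ : ℝ) :
    ‖α • F.e + β • F.f + γ • F.v‖ ^ 2 = α ^ 2 + β ^ 2 + γ ^ 2 := by
  have h := F.orthonormal.inner_sum ![α, β, γ] ![α, β, γ] Finset.univ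
  rw [← real_inner_self_eq_norm_sq]
  simpa [Fin.sum_univ_three, ← pow_two] using h

theorem exists_combination (y : R3) : ∃ α β γ : ℝ, y = α • F.e + β • F.f + γ • F.v := by
  set b := OrthonormalBasis.mk F.orthonormal
    (F.orthonormal.linearIndependent.span_eq_top_of_card_eq_finrank (by simp)).ge
  refine ⟨inner ℝ F.e y, inner ℝ F.f y, inner ℝ F.v y, ?_⟩
  simpa [b, Fin.sum_univ_three] using (b.sum_repr' y).symm

end Frame

end Frames

section Bubbles
open Matrix

/-- The inclusion `ℝ³ → ℂ³`. -/
def toComplex (x : R3) (i : Fin 3) : ℂ := x i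

theorem star_toComplex (x : R3) : star (toComplex x) = toComplex x := by
  ext i
  exact Complex.conj_ofReal _

theorem norm_toComplex_le (x : R3) : ‖toComplex x‖ ≤ ‖x‖ :=
  (pi_norm_le_iff_of_nonneg (norm_nonneg x)).2 fun i =>
    (Complex.norm_real _).trans_le (PiLp.norm_apply_le x i)

theorem hermitianCross_toComplex (x y : R3) :
    hermitianCross (toComplex x) (toComplex y) = -Complex.I • toComplex (cross x y) := by
  ext i
  fin_cases i <;> simp [hermitianCross_apply, cross_apply, toComplex, cross, e3]

theorem hermitianCross_anticomm (x y : Fin 3 → ℂ) : hermitianCross y x = -hermitianCross x y := by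
  rw [hermitianCross_apply, hermitianCross_apply, ← cross_anticomm, smul_neg]

theorem hermitianCross_self (x : Fin 3 → ℂ) : hermitianCross x x = 0 := by
  rw [hermitianCross_apply, cross_self, smul_zero]

namespace Frame

variable (F : Frame)

/-- The complexification of `v`. -/
def vC : Fin 3 → ℂ := toComplex F.v

/-- The isotropic vector `e - i f`. -/
def ν : Fin 3 → ℂ := toComplex F.e - Complex.I • toComplex F.f

theorem star_vC : star F.vC = F.vC := star_toComplex _

theorem star_ν : star F.ν = toComplex F.e + Complex.I • toComplex F.f := by
  simp [ν, star_toComplex]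

theorem norm_vC_le : ‖F.vC‖ ≤ 1 := (norm_toComplex_le _).trans_eq F.norm_v

theorem norm_ν_le : ‖F.ν‖ ≤ 2 := by
  refine (norm_sub_le _ _).trans ?_
  rw [norm_smul, Complex.norm_I, one_mul]
  linarith [norm_toComplex_le F.e, norm_toComplex_le F.f, F.norm_e, F.norm_f]

theorem hermitianCross_ν_star_ν : hermitianCross F.ν (star F.ν) = (2 : ℂ) • F.vC := by
  have hef : hermitianCross (toComplex F.e) (toComplex F.f) = -Complex.I • F.vC := by
    rw [hermitianCross_toComplex, F.cross_e_f, vC]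
  rw [star_ν, ν]
  simp only [map_sub, map_add, map_smul, _root_.sub_apply, _root_.smul_apply, hermitianCross_self,
    hermitianCross_anticomm (toComplex F.e) (toComplex F.f), hef]
  match_scalars
  linear_combination -2 * Complex.I_sq

theorem hermitianCross_vC_ν : hermitianCross F.vC F.ν = F.ν := by
  have hve : hermitianCross F.vC (toComplex F.e) = -Complex.I • toComplex F.f :=
    hermitianCross_toComplex _ _
  have hvf : hermitianCross F.vC (toComplex F.f) = Complex.I • toComplex F.e := by
    rw [hermitianCross_anticomm, vC, hermitianCross_toComplex, F.cross_f_v, neg_smul, neg_neg]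
  rw [ν, map_sub, map_smul, hve, hvf, smul_smul, Complex.I_mul_I]
  module

theorem hermitianCross_vC_star_ν : hermitianCross F.vC (star F.ν) = -star F.ν := by
  have h := congrArg star F.hermitianCross_vC_ν
  rw [star_hermitianCross, star_vC, hermitianCross_anticomm] at h
  exact neg_eq_iff_eq_neg.1 h

/-- The holomorphic extension `B(a, b)` of the inverse stereographic projection
`ζ ↦ B(ζ, star ζ)` from the point `2 v` onto the unit sphere centred at `v`. -/
def bubble (a b : ℂ) : Fin 3 → ℂ :=
  (1 + a * b)⁻¹ • (a • F.ν + b • star F.ν + (2 * a * b) • F.vC)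

/-- The derivative of `bubble` in its first variable. -/
def bubbleDeriv (a b : ℂ) : Fin 3 → ℂ :=
  ((1 + a * b)⁻¹ ^ 2) • (F.ν + (2 * b) • F.vC - b ^ 2 • star F.ν)

theorem star_bubble (a b : ℂ) : star (F.bubble a b) = F.bubble (star b) (star a) := by
  simp only [bubble, star_smul, star_add, star_star, star_vC, star_inv₀, star_mul, star_one,
    star_ofNat]
  module

variable {F}

theorem hasDerivAt_bubble {a b : ℂ} (h : 1 + a * b ≠ 0) :
    HasDerivAt (fun a => F.bubble a b) (F.bubbleDeriv a b) a := by
  have hden : HasDerivAt (fun a => 1 + a * b) b a := by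
    simpa using ((hasDerivAt_id a).mul_const b).const_add 1
  have hnum : HasDerivAt (fun a => a • F.ν + b • star F.ν + (2 * a * b) • F.vC)
      (F.ν + (2 * b) • F.vC) a := by
    refine ((((hasDerivAt_id a).smul_const F.ν).add_const (b • star F.ν)).add
      ((((hasDerivAt_id a).const_mul 2).mul_const b).smul_const F.vC)).congr_deriv ?_
    module
  refine ((hden.fun_inv h).smul hnum).congr_deriv ?_
  rw [bubbleDeriv]
  match_scalars <;> field_simp <;> ring

theorem hermitianCross_bubbleDeriv {a b : ℂ} (h : 1 + a * b ≠ 0) :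
    hermitianCross (F.bubbleDeriv a b) (star (F.bubbleDeriv (star b) (star a))) =
      ((1 + a * b)⁻¹ ^ 3) •
        ((2 * (1 - a * b)) • F.vC - (2 * b) • star F.ν - (2 * a) • F.ν) := by
  have hstar : star (F.bubbleDeriv (star b) (star a)) =
      ((1 + a * b)⁻¹ ^ 2) • (star F.ν + (2 * a) • F.vC - a ^ 2 • F.ν) := by
    simp only [bubbleDeriv, star_smul, star_add, star_sub, star_star, star_vC, star_inv₀, star_mul,
      star_one, star_ofNat, star_pow, mul_comm]
  have hfactor : hermitianCross (F.ν + (2 * b) • F.vC - b ^ 2 • star F.ν)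
      (star F.ν + (2 * a) • F.vC - a ^ 2 • F.ν) =
      (1 + a * b) • ((2 * (1 - a * b)) • F.vC - (2 * b) • star F.ν - (2 * a) • F.ν) := by
    simp only [map_sub, map_add, map_smul, _root_.sub_apply, _root_.add_apply, _root_.smul_apply,
      hermitianCross_self, hermitianCross_anticomm F.vC F.ν,
      hermitianCross_anticomm F.vC (star F.ν), hermitianCross_anticomm F.ν (star F.ν),
      hermitianCross_ν_star_ν, hermitianCross_vC_ν, hermitianCross_vC_star_ν]
    module
  rw [hstar, bubbleDeriv, map_smul, map_smul, _root_.smul_apply, hfactor]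
  match_scalars <;> field_simp

theorem hasDerivAt_bubbleDeriv_snd {a b : ℂ} (h : 1 + a * b ≠ 0) :
    HasDerivAt (F.bubbleDeriv a)
      (hermitianCross (F.bubbleDeriv a b) (star (F.bubbleDeriv (star b) (star a)))) b := by
  have hden : HasDerivAt (fun b => 1 + a * b) a b := by
    simpa using ((hasDerivAt_id b).const_mul a).const_add 1
  have hnum : HasDerivAt (fun b => F.ν + (2 * b) • F.vC - b ^ 2 • star F.ν)
      ((2 : ℂ) • F.vC - (2 * b) • star F.ν) b := by
    refine (((((hasDerivAt_id b).const_mul 2).smul_const F.vC).const_add F.ν).sub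
      (((hasDerivAt_id b).pow 2).smul_const (star F.ν))).congr_deriv ?_
    simp
  refine (((hden.fun_inv h).fun_pow 2).smul hnum).congr_deriv ?_
  rw [hermitianCross_bubbleDeriv h]
  simp only [Nat.cast_ofNat, Nat.add_one_sub_one, pow_one]
  match_scalars <;> field_simp <;> ring

theorem norm_bubbleDeriv_le {a b : ℂ} {M : ℝ} (hb : ‖b‖ ≤ M) (h : 1 / 4 ≤ ‖1 + a * b‖) :
    ‖F.bubbleDeriv a b‖ ≤ 32 * (1 + M + M ^ 2) := by
  have hinv : ‖(1 + a * b)⁻¹‖ ≤ 4 := by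
    rw [norm_inv]
    exact inv_le_of_inv_le₀ (by norm_num) (by simpa using h)
  have hvec : ‖F.ν + (2 * b) • F.vC - b ^ 2 • star F.ν‖ ≤ 2 * (1 + M + M ^ 2) := by
    calc _ ≤ ‖F.ν‖ + ‖(2 * b) • F.vC‖ + ‖b ^ 2 • star F.ν‖ :=
          (norm_sub_le _ _).trans (by gcongr; exact norm_add_le _ _)
      _ = ‖F.ν‖ + 2 * ‖b‖ * ‖F.vC‖ + ‖b‖ ^ 2 * ‖F.ν‖ := by simp [norm_smul]
      _ ≤ 2 + 2 * M * 1 + M ^ 2 * 2 := by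
          gcongr
          exacts [F.norm_ν_le, by linarith [norm_nonneg b], F.norm_vC_le, F.norm_ν_le]
      _ = 2 * (1 + M + M ^ 2) := by ring
  rw [bubbleDeriv, norm_smul, norm_pow]
  calc _ ≤ 4 ^ 2 * (2 * (1 + M + M ^ 2)) := by gcongr
    _ = _ := by ring

end Frame

end Bubbles

section StereographicProjection

theorem norm_sq_eq_re_im (ζ : ℂ) : ‖ζ‖ ^ 2 = ζ.re ^ 2 + ζ.im ^ 2 := by
  rw [Complex.sq_norm, Complex.normSq_apply, pow_two, pow_two]

namespace Frame

variable (F : Frame)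

/-- The inverse stereographic projection from the point `2 v` onto the unit sphere centred at `v`,
in the coordinates given by the frame. -/
def stereoInv (ζ : ℂ) : R3 :=
  (1 + ‖ζ‖ ^ 2)⁻¹ • ((2 * ζ.re) • F.e + (2 * ζ.im) • F.f + (2 * ‖ζ‖ ^ 2) • F.v)

theorem reVec_bubble (ζ : ℂ) : reVec (F.bubble ζ (star ζ)) = F.stereoInv ζ := by
  have hnorm : ζ * star ζ = ((‖ζ‖ ^ 2 : ℝ) : ℂ) := by
    rw [Complex.star_def, Complex.mul_conj, Complex.normSq_eq_norm_sq]
  have hden : (1 + ζ * star ζ)⁻¹ = (((1 + ‖ζ‖ ^ 2)⁻¹ : ℝ) : ℂ) := by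
    rw [hnorm]
    push_cast
    rfl
  ext i
  rw [bubble, stereoInv, hden, mul_assoc, hnorm, star_ν, ν, vC]
  generalize (1 + ‖ζ‖ ^ 2)⁻¹ = r
  generalize ‖ζ‖ ^ 2 = s
  simp only [RCLike.star_def, smul_add, Complex.coe_smul, map_add, map_smul, PiLp.add_apply,
    PiLp.smul_apply, reVec_apply, Pi.smul_apply, Pi.sub_apply, toComplex, smul_eq_mul,
    Complex.mul_re, Complex.sub_re, Complex.ofReal_re, Complex.I_re, Complex.I_im,
    Complex.ofReal_im, Complex.sub_im, Complex.mul_im, Complex.conj_re, Complex.conj_im,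
    Complex.re_ofNat, Complex.im_ofNat]
  ring

variable {F}

theorem stereoInv_mem_sphere (ζ : ℂ) : F.stereoInv ζ ∈ sphere F.v 1 := by
  have hcomb : F.stereoInv ζ - F.v = (2 * ζ.re / (1 + ‖ζ‖ ^ 2)) • F.e +
      (2 * ζ.im / (1 + ‖ζ‖ ^ 2)) • F.f + ((‖ζ‖ ^ 2 - 1) / (1 + ‖ζ‖ ^ 2)) • F.v := by
    rw [stereoInv]
    match_scalars <;> field_simp
    ring
  rw [mem_sphere, dist_eq_norm, ← sq_eq_sq₀ (norm_nonneg _) zero_le_one, hcomb,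
    F.norm_sq_combination]
  field_simp
  linear_combination -4 * norm_sq_eq_re_im ζ

theorem norm_stereoInv_le (ζ : ℂ) : ‖F.stereoInv ζ‖ ≤ 2 * ‖ζ‖ := by
  have hsq : ‖F.stereoInv ζ‖ ^ 2 = 4 * ‖ζ‖ ^ 2 / (1 + ‖ζ‖ ^ 2) := by
    rw [stereoInv, norm_smul, mul_pow, F.norm_sq_combination, norm_inv, Real.norm_eq_abs, inv_pow,
      sq_abs]
    field_simp
    linear_combination -4 * norm_sq_eq_re_im ζ
  rw [← sq_le_sq₀ (norm_nonneg _) (by positivity), hsq, mul_pow]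
  exact (div_le_self (by positivity) (by nlinarith)).trans_eq (by norm_num)

theorem norm_stereoInv_sub_mul_le (ζ : ℂ) : ‖F.stereoInv ζ - (2 : ℝ) • F.v‖ * ‖ζ‖ ≤ 2 := by
  have hcomb : F.stereoInv ζ - (2 : ℝ) • F.v = (2 * ζ.re / (1 + ‖ζ‖ ^ 2)) • F.e +
      (2 * ζ.im / (1 + ‖ζ‖ ^ 2)) • F.f + (-2 / (1 + ‖ζ‖ ^ 2)) • F.v := by
    rw [stereoInv]
    match_scalars <;> field_simp
    ring
  have hsq : ‖F.stereoInv ζ - (2 : ℝ) • F.v‖ ^ 2 = 4 / (1 + ‖ζ‖ ^ 2) := by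
    rw [hcomb, F.norm_sq_combination]
    field_simp
    linear_combination -4 * norm_sq_eq_re_im ζ
  rw [← sq_le_sq₀ (by positivity) (by positivity), mul_pow, hsq, div_mul_eq_mul_div,
    div_le_iff₀ (by positivity)]
  nlinarith [sq_nonneg ‖ζ‖]

theorem exists_stereoInv_eq {y : R3} (hy : y ∈ sphere F.v 1) (hne : y ≠ (2 : ℝ) • F.v) :
    ∃ ζ, F.stereoInv ζ = y := by
  obtain ⟨α, β, γ, hcomb⟩ := F.exists_combination (y - F.v)
  have hunit : α ^ 2 + β ^ 2 + γ ^ 2 = 1 := by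
    rw [← F.norm_sq_combination, ← hcomb, ← dist_eq_norm, mem_sphere.1 hy, one_pow]
  have hγ : 1 - γ ≠ 0 := fun h => hne <| by
    obtain rfl : γ = 1 := by linarith
    obtain rfl : α = 0 := by nlinarith
    obtain rfl : β = 0 := by nlinarith
    rw [eq_add_of_sub_eq hcomb]
    module
  refine ⟨⟨α / (1 - γ), β / (1 - γ)⟩, ?_⟩
  have hnorm : ‖(⟨α / (1 - γ), β / (1 - γ)⟩ : ℂ)‖ ^ 2 = (1 + γ) / (1 - γ) := by
    rw [norm_sq_eq_re_im]
    field_simp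
    linear_combination hunit
  have hinv : (1 + (1 + γ) / (1 - γ))⁻¹ = (1 - γ) / 2 := by
    field_simp
    norm_num
  rw [stereoInv, hnorm, hinv, eq_add_of_sub_eq hcomb]
  match_scalars <;> field_simp
  ring

theorem exists_dist_stereoInv_le {y : R3} (hy : y ∈ sphere F.v 1) {δ : ℝ} (h0 : 0 < δ)
    (h1 : δ < 1) : ∃ ζ : ℂ, δ ≤ ‖ζ‖ ∧ ‖ζ‖ ≤ δ⁻¹ ∧ dist (F.stereoInv ζ) y ≤ 4 * δ := by
  have hδ : δ ≤ δ⁻¹ := h1.le.trans ((one_le_inv₀ h0).2 h1.le)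
  have hnorm : ‖(δ : ℂ)‖ = δ := Complex.norm_of_nonneg h0.le
  have hnorm' : ‖(δ⁻¹ : ℂ)‖ = δ⁻¹ := by rw [norm_inv, hnorm]
  have hfar : ∀ ζ : ℂ, δ⁻¹ ≤ ‖ζ‖ → dist (F.stereoInv ζ) ((2 : ℝ) • F.v) ≤ 2 * δ := fun ζ hζ => by
    have h := (mul_le_mul_of_nonneg_left hζ (norm_nonneg _)).trans
      (norm_stereoInv_sub_mul_le (F := F) ζ)
    rwa [← div_eq_mul_inv, div_le_iff₀ h0, ← dist_eq_norm] at h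
  have hpole : dist y ((2 : ℝ) • F.v) ≤ 2 * δ → ∃ ζ : ℂ, δ ≤ ‖ζ‖ ∧ ‖ζ‖ ≤ δ⁻¹ ∧
      dist (F.stereoInv ζ) y ≤ 4 * δ := fun h =>
    ⟨(δ⁻¹ : ℂ), by rwa [hnorm'], hnorm'.le, (dist_triangle_right _ _ ((2 : ℝ) • F.v)).trans
      (by linarith [hfar _ hnorm'.ge])⟩
  obtain rfl | hne := eq_or_ne y ((2 : ℝ) • F.v)
  · exact hpole (by rw [dist_self]; positivity)
  obtain ⟨ζ, rfl⟩ := exists_stereoInv_eq hy hne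
  rcases le_total δ⁻¹ ‖ζ‖ with hlarge | hlarge
  · exact hpole (hfar ζ hlarge)
  rcases le_total δ ‖ζ‖ with hsmall | hsmall
  · exact ⟨ζ, hsmall, hlarge, by rw [dist_self]; positivity⟩
  · refine ⟨δ, hnorm.ge, hnorm.trans_le hδ, (dist_le_norm_add_norm _ _).trans ?_⟩
    linarith [norm_stereoInv_le (F := F) ζ, norm_stereoInv_le (F := F) δ]

end Frame

end StereographicProjection

section LiftedBubble

variable {h : ℂ → ℂ}

theorem hasDerivAt_star_comp_star (hh : Differentiable ℂ h) (w : ℂ) :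
    HasDerivAt (fun w => star (h (star w))) (star (deriv h (star w))) w := by
  have hd := (hh (star w)).hasDerivAt.star_conj
  rwa [starRingEnd_apply, star_star] at hd

theorem differentiable_star_comp_star (hh : Differentiable ℂ h) :
    Differentiable ℂ fun w => star (h (star w)) := fun w =>
  (hasDerivAt_star_comp_star hh w).differentiableAt

namespace Frame

variable {F : Frame} {E : Type*} [NormedAddCommGroup E] [NormedSpace ℂ E] {f g : E → ℂ} {y : E}

theorem differentiableAt_bubble (hf : DifferentiableAt ℂ f y) (hg : DifferentiableAt ℂ g y)
    (hy : 1 + f y * g y ≠ 0) : DifferentiableAt ℂ (fun y => F.bubble (f y) (g y)) y := by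
  have hden : DifferentiableAt ℂ (fun y => 1 + f y * g y) y := by fun_prop
  exact (hden.fun_inv hy).smul (by fun_prop)

theorem differentiableAt_bubbleDeriv (hf : DifferentiableAt ℂ f y) (hg : DifferentiableAt ℂ g y)
    (hy : 1 + f y * g y ≠ 0) : DifferentiableAt ℂ (fun y => F.bubbleDeriv (f y) (g y)) y := by
  have hden : DifferentiableAt ℂ (fun y => 1 + f y * g y) y := by fun_prop
  exact ((hden.fun_inv hy).pow 2).smul (by fun_prop)

variable (F h)

/-- The extension to `ℂ × ℂ` of the bubble `F.stereoInv ∘ h` with holomorphic `h`. -/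
def lift (x : ℂ × ℂ) : Fin 3 → ℂ := F.bubble (h x.1) (star (h (star x.2)))

/-- The derivative of `F.lift h` in its first variable. -/
def liftDeriv (x : ℂ × ℂ) : Fin 3 → ℂ :=
  deriv h x.1 • F.bubbleDeriv (h x.1) (star (h (star x.2)))

theorem dagger_lift : dagger (F.lift h) = F.lift h := by
  ext1 x
  simp [dagger, lift, star_bubble]

theorem realDiag_lift (z : ℂ) : realDiag (F.lift h) z = F.stereoInv (h z) := by
  rw [realDiag, lift, star_star, reVec_bubble]

variable {F h} {x : ℂ × ℂ}

theorem hasDerivAt_lift_fst (hh : Differentiable ℂ h)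
    (hx : 1 + h x.1 * star (h (star x.2)) ≠ 0) :
    HasDerivAt (fun z => F.lift h (z, x.2)) (F.liftDeriv h x) x.1 :=
  (hasDerivAt_bubble hx).scomp x.1 (hh x.1).hasDerivAt

theorem hasDerivAt_lift_snd (hh : Differentiable ℂ h)
    (hx : 1 + h x.1 * star (h (star x.2)) ≠ 0) :
    HasDerivAt (fun w => F.lift h (x.1, w)) (dagger (F.liftDeriv h) x) x.2 := by
  have hx' : 1 + h (star x.2) * star (h (star (star x.1))) ≠ 0 := fun h0 => hx <| by
    simpa [mul_comm] using congrArg star h0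
  have hd := hasDerivAt_dagger_snd (hasDerivAt_lift_fst (F := F) (x := star x.swap) hh hx')
  rwa [dagger_lift] at hd

theorem hasDerivAt_liftDeriv_snd (hh : Differentiable ℂ h)
    (hx : 1 + h x.1 * star (h (star x.2)) ≠ 0) :
    HasDerivAt (fun w => F.liftDeriv h (x.1, w))
      (hermitianCross (F.liftDeriv h x) (dagger (F.liftDeriv h) x)) x.2 := by
  refine (((hasDerivAt_bubbleDeriv_snd hx).scomp x.2
    (hasDerivAt_star_comp_star hh x.2)).const_smul (deriv h x.1)).congr_deriv ?_
  simp [liftDeriv, dagger, smul_smul, mul_comm]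

theorem differentiableAt_lift (hh : Differentiable ℂ h)
    (hx : 1 + h x.1 * star (h (star x.2)) ≠ 0) : DifferentiableAt ℂ (F.lift h) x :=
  differentiableAt_bubble (by fun_prop)
    ((differentiable_star_comp_star hh).comp differentiable_snd x) hx

theorem differentiableAt_liftDeriv (hh : Differentiable ℂ h)
    (hx : 1 + h x.1 * star (h (star x.2)) ≠ 0) : DifferentiableAt ℂ (F.liftDeriv h) x := by
  have hderiv : Differentiable ℂ (deriv h) := fun z => (hh.analyticAt z).deriv.differentiableAt
  exact (hderiv.comp differentiable_fst x).smul (differentiableAt_bubbleDeriv (by fun_prop)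
    ((differentiable_star_comp_star hh).comp differentiable_snd x) hx)

theorem norm_liftDeriv_le {M : ℝ} (hM : ‖h (star x.2)‖ ≤ M)
    (hx : 1 / 4 ≤ ‖1 + h x.1 * star (h (star x.2))‖) :
    ‖F.liftDeriv h x‖ ≤ 32 * (1 + M + M ^ 2) * ‖deriv h x.1‖ := by
  rw [liftDeriv, norm_smul, mul_comm]
  gcongr
  exact norm_bubbleDeriv_le (by rwa [norm_star]) hx

end Frame

end LiftedBubble

section GoursatCore

/-- The points all of whose contractions `(s z, t w)`, `s, t ∈ [0, 1]`, lie in `N`. -/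
def goursatCore (N : Set (ℂ × ℂ)) : Set (ℂ × ℂ) :=
  {x | ∀ p ∈ Icc (0 : ℝ) 1 ×ˢ Icc (0 : ℝ) 1, (p.1 * x.1, p.2 * x.2) ∈ N}

variable {N : Set (ℂ × ℂ)}

theorem goursatCore_subset : goursatCore N ⊆ N := fun x hx => by
  simpa using hx (1, 1) (by simp)

theorem isGoursatDomain_goursatCore (hN : IsOpen N) (hstar : ∀ x ∈ N, star x.swap ∈ N) :
    IsGoursatDomain (goursatCore N) where
  isOpen := isOpen_iff_mem_nhds.2 fun x hx =>
    (isCompact_Icc.prod isCompact_Icc).eventually_forall_of_forall_eventually fun p hp =>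
      (hN.preimage (by fun_prop : Continuous fun q : (ℂ × ℂ) × ℝ × ℝ =>
        ((q.2.1 : ℂ) * q.1.1, (q.2.2 : ℂ) * q.1.2))).mem_nhds (hx p hp)
  star_swap_mem x hx p hp := by
    simpa [Prod.star_def] using hstar _ (hx p.swap ⟨hp.2, hp.1⟩)
  mul_snd_mem x hx τ hτ p hp := by
    simpa [mul_assoc] using hx (p.1, p.2 * τ) ⟨hp.1, unitInterval.mul_mem hp.2 hτ⟩

end GoursatCore

section BubbleConfig

/-- A bound for `λ⁻¹` times the gradient of a sum of `n` bubbles as in `BubbleConfig.map`. -/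
def gradientConst (n : ℕ) (M : ℝ) : ℝ := n * (32 * (1 + M + M ^ 2)) * M

theorem gradientConst_pos {n : ℕ} {M : ℝ} (hn : 0 < n) (hM : 0 < M) : 0 < gradientConst n M := by
  unfold gradientConst
  positivity

/-- Finitely many bubbles concentrating at distinct points `pt j` of the unit circle, with
concentration parameter `Λ`. -/
structure BubbleConfig (ι : Type*) [Fintype ι] where
  (frame : ι → Frame) (pt : ι → ℂ) (M Λ c : ℝ)
  norm_pt : ∀ j, ‖pt j‖ = 1
  two_le_M : 2 ≤ M
  c_pos : 0 < c
  c_le : c ≤ 1 / 2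
  norm_pt_add_pt_le : ∀ i j, i ≠ j → ‖pt i + pt j‖ ≤ 2 - 2 * c
  log_pow_le : 2 * Real.log (2 * M ^ 2) ^ 3 ≤ Λ - 1
  gradientConst_le : 64 * gradientConst (Fintype.card ι) M ≤ c * Λ

namespace BubbleConfig

variable {ι : Type*} [Fintype ι] (𝓑 : BubbleConfig ι)

/-- The exponential rate `λ = Λ - 1` of the bubbles. -/
def rate : ℝ := 𝓑.Λ - 1

/-- The radius `Λ / λ > 1` of a disk on which all bubbles are controlled. -/
def radius : ℝ := 𝓑.Λ / 𝓑.rate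

/-- The component of `z` in the direction of `pt j`. -/
def height (j : ι) (z : ℂ) : ℝ := (star (𝓑.pt j) * z).re

/-- The holomorphic map whose composition with the stereographic projection is the `j`-th bubble. -/
def map (j : ι) (z : ℂ) : ℂ := 𝓑.M * Complex.exp (𝓑.rate * (star (𝓑.pt j) * z) - 𝓑.Λ)

theorem one_le_log : 1 ≤ Real.log (2 * 𝓑.M ^ 2) := by
  have := 𝓑.two_le_M
  rw [Real.le_log_iff_exp_le (by positivity)]
  nlinarith [Real.exp_one_lt_d9]

theorem rate_pos : 0 < 𝓑.rate :=
  lt_of_lt_of_le (by have := 𝓑.one_le_log; positivity) 𝓑.log_pow_le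

theorem rate_lt : 𝓑.rate < 𝓑.Λ := sub_one_lt _

theorem one_lt_radius : 1 < 𝓑.radius := (one_lt_div 𝓑.rate_pos).2 𝓑.rate_lt

theorem rate_mul_radius : 𝓑.rate * 𝓑.radius = 𝓑.Λ := mul_div_cancel₀ _ 𝓑.rate_pos.ne'

theorem M_pos : 0 < 𝓑.M := two_pos.trans_le 𝓑.two_le_M

variable {𝓑} {i j : ι} {z : ℂ}

theorem height_le_norm : 𝓑.height j z ≤ ‖z‖ := by
  simpa [height, 𝓑.norm_pt j] using Complex.re_le_norm (star (𝓑.pt j) * z)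

theorem differentiable_map : Differentiable ℂ (𝓑.map j) := by
  unfold map
  fun_prop

theorem deriv_map : deriv (𝓑.map j) z = 𝓑.rate * star (𝓑.pt j) * 𝓑.map j z := by
  have h : HasDerivAt (fun z => 𝓑.rate * (star (𝓑.pt j) * z) - 𝓑.Λ)
      (𝓑.rate * (star (𝓑.pt j) * 1)) z :=
    (((hasDerivAt_id z).const_mul _).const_mul _).sub_const _
  refine (h.cexp.const_mul (𝓑.M : ℂ)).deriv.trans ?_
  rw [map]
  ring

theorem norm_map : ‖𝓑.map j z‖ = 𝓑.M * Real.exp (𝓑.rate * 𝓑.height j z - 𝓑.Λ) := by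
  simp only [map, norm_mul, Complex.norm_exp, Complex.sub_re, Complex.re_ofReal_mul,
    Complex.ofReal_re, Complex.norm_of_nonneg 𝓑.M_pos.le, height]

theorem norm_deriv_map : ‖deriv (𝓑.map j) z‖ = 𝓑.rate * ‖𝓑.map j z‖ := by
  rw [deriv_map, norm_mul, norm_mul, norm_star, 𝓑.norm_pt, mul_one,
    Complex.norm_of_nonneg 𝓑.rate_pos.le]

variable (𝓑)

/-- The radial profile of the bubbles. -/
def profile (r : ℝ) : ℝ := Real.exp ((𝓑.rate * r - 𝓑.Λ) / 2)

variable {𝓑}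

theorem norm_map_le_profile (hz : ‖z‖ < 𝓑.radius) : ‖𝓑.map j z‖ ≤ 𝓑.M * 𝓑.profile ‖z‖ := by
  rw [norm_map, profile]
  have h := mul_lt_mul_of_pos_left hz 𝓑.rate_pos
  rw [rate_mul_radius] at h
  have h' := mul_le_mul_of_nonneg_left (height_le_norm (𝓑 := 𝓑) (j := j) (z := z)) 𝓑.rate_pos.le
  have := 𝓑.M_pos
  gcongr
  linarith

theorem profile_le_one {r : ℝ} (hr : r < 𝓑.radius) : 𝓑.profile r ≤ 1 := by
  have h := mul_lt_mul_of_pos_left hr 𝓑.rate_pos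
  rw [rate_mul_radius] at h
  exact Real.exp_le_one_iff.2 (by linarith)

theorem norm_map_le (hz : ‖z‖ < 𝓑.radius) : ‖𝓑.map j z‖ ≤ 𝓑.M :=
  (norm_map_le_profile hz).trans (mul_le_of_le_one_right 𝓑.M_pos.le (profile_le_one hz))

theorem norm_map_mul_norm_map_le {w : ℂ}
    (h : 𝓑.height i z + 𝓑.height j w < 𝓑.radius * (2 - 2 * 𝓑.c)) :
    ‖𝓑.map i z‖ * ‖𝓑.map j w‖ ≤
      𝓑.M ^ 2 * (Real.exp (-(𝓑.c * 𝓑.Λ)) * 𝓑.profile ‖z‖ * 𝓑.profile ‖w‖) := by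
  have hmul := mul_lt_mul_of_pos_left h 𝓑.rate_pos
  rw [← mul_assoc, rate_mul_radius] at hmul
  have hheight : 𝓑.rate * (𝓑.height i z + 𝓑.height j w) ≤ 𝓑.rate * (‖z‖ + ‖w‖) :=
    mul_le_mul_of_nonneg_left (add_le_add height_le_norm height_le_norm) 𝓑.rate_pos.le
  rw [norm_map, norm_map, mul_mul_mul_comm, ← pow_two, ← Real.exp_add, profile, profile,
    ← Real.exp_add, ← Real.exp_add]
  have := 𝓑.M_pos
  refine mul_le_mul_of_nonneg_left (Real.exp_le_exp.2 ?_) (by positivity)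
  linarith

variable (𝓑)

/-- The points at which all bubbles are bounded and interact weakly. -/
def nbhd : Set (ℂ × ℂ) :=
  {x | ‖x.1‖ < 𝓑.radius ∧ ‖x.2‖ < 𝓑.radius ∧
    (∀ j, 1 / 4 < ‖1 + 𝓑.map j x.1 * star (𝓑.map j (star x.2))‖) ∧
    ∀ i j, i ≠ j → 𝓑.height i x.1 + 𝓑.height j (star x.2) < 𝓑.radius * (2 - 2 * 𝓑.c)}

theorem isOpen_nbhd : IsOpen 𝓑.nbhd := by
  have hmap : ∀ j, Continuous (𝓑.map j) := fun j => differentiable_map.continuous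
  simp only [nbhd, ofPred_and, ofPred_forall, height]
  refine (isOpen_lt (by fun_prop) continuous_const).inter
    ((isOpen_lt (by fun_prop) continuous_const).inter
      ((isOpen_iInter_of_finite fun j => isOpen_lt continuous_const (by fun_prop)).inter
        (isOpen_iInter_of_finite fun i => isOpen_iInter_of_finite fun j =>
          isOpen_iInter_of_finite fun _ => isOpen_lt (by fun_prop) continuous_const)))

theorem star_swap_mem_nbhd (x : ℂ × ℂ) (hx : x ∈ 𝓑.nbhd) : star x.swap ∈ 𝓑.nbhd := by
  obtain ⟨h1, h2, hden, hsep⟩ := hx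
  refine ⟨(norm_star x.2).trans_lt h2, (norm_star x.1).trans_lt h1, fun j => ?_, fun i j hij => ?_⟩
  · have h := hden j
    rw [← norm_star, star_add, star_mul, star_star, star_one] at h
    simpa using h
  · have h := hsep j i hij.symm
    rw [add_comm] at h
    simpa using h

/-- The domain on which the sum of the bubbles is corrected to a solution. -/
def domain : Set (ℂ × ℂ) := goursatCore 𝓑.nbhd

theorem isGoursatDomain_domain : IsGoursatDomain 𝓑.domain :=
  isGoursatDomain_goursatCore 𝓑.isOpen_nbhd 𝓑.star_swap_mem_nbhd

/-- The derivative in the first variable of the sum of all bubbles. -/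
def sumDeriv (x : ℂ × ℂ) : Fin 3 → ℂ := ∑ j, (𝓑.frame j).liftDeriv (𝓑.map j) x

/-- The sum of all interactions `hermitianCross (∂uᵢ/∂z) (∂uⱼ/∂w)` of distinct bubbles. -/
def interaction (x : ℂ × ℂ) : Fin 3 → ℂ :=
  hermitianCross (𝓑.sumDeriv x) (dagger 𝓑.sumDeriv x) -
    ∑ j, hermitianCross ((𝓑.frame j).liftDeriv (𝓑.map j) x)
      (dagger ((𝓑.frame j).liftDeriv (𝓑.map j)) x)

theorem dagger_interaction : dagger 𝓑.interaction = 𝓑.interaction := by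
  ext1 x
  refine (star_sub _ _).trans (congrArg₂ (· - ·)
    (congrFun (dagger_hermitianCross_dagger 𝓑.sumDeriv) x) ?_)
  rw [star_sum]
  exact Finset.sum_congr rfl fun j _ =>
    congrFun (dagger_hermitianCross_dagger ((𝓑.frame j).liftDeriv (𝓑.map j))) x

theorem dagger_sumDeriv (x : ℂ × ℂ) :
    dagger 𝓑.sumDeriv x = ∑ j, dagger ((𝓑.frame j).liftDeriv (𝓑.map j)) x := star_sum _ _

variable {𝓑} {x : ℂ × ℂ}

theorem one_add_ne_zero (hx : x ∈ 𝓑.nbhd) (j : ι) :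
    1 + 𝓑.map j x.1 * star (𝓑.map j (star x.2)) ≠ 0 :=
  norm_pos_iff.1 ((by norm_num : (0 : ℝ) < 1 / 4).trans (hx.2.2.1 j))

theorem norm_liftDeriv_map_le (hx : x ∈ 𝓑.nbhd) (j : ι) :
    ‖(𝓑.frame j).liftDeriv (𝓑.map j) x‖ ≤
      32 * (1 + 𝓑.M + 𝓑.M ^ 2) * (𝓑.rate * ‖𝓑.map j x.1‖) := by
  rw [← norm_deriv_map]
  exact Frame.norm_liftDeriv_le (norm_map_le ((norm_star x.2).trans_lt hx.2.1)) (hx.2.2.1 j).le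

theorem norm_sumDeriv_le (hx : x ∈ 𝓑.nbhd) :
    ‖𝓑.sumDeriv x‖ ≤ gradientConst (Fintype.card ι) 𝓑.M * 𝓑.rate * 𝓑.profile ‖x.1‖ := by
  have := 𝓑.M_pos
  have := 𝓑.rate_pos
  calc ‖𝓑.sumDeriv x‖ ≤ ∑ _j : ι,
        32 * (1 + 𝓑.M + 𝓑.M ^ 2) * (𝓑.rate * (𝓑.M * 𝓑.profile ‖x.1‖)) :=
      norm_sum_le_of_le _ fun j _ => (norm_liftDeriv_map_le hx j).trans <| by
        gcongr
        exact norm_map_le_profile hx.1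
    _ = gradientConst (Fintype.card ι) 𝓑.M * 𝓑.rate * 𝓑.profile ‖x.1‖ := by
      rw [Finset.sum_const, Finset.card_univ, nsmul_eq_mul, gradientConst]
      ring

theorem norm_hermitianCross_liftDeriv_le (hx : x ∈ 𝓑.nbhd) (hij : i ≠ j) :
    ‖hermitianCross ((𝓑.frame i).liftDeriv (𝓑.map i) x)
      (dagger ((𝓑.frame j).liftDeriv (𝓑.map j)) x)‖ ≤
    2 * (32 * (1 + 𝓑.M + 𝓑.M ^ 2) * 𝓑.rate * 𝓑.M) ^ 2 *
      (Real.exp (-(𝓑.c * 𝓑.Λ)) * 𝓑.profile ‖x.1‖ * 𝓑.profile ‖x.2‖) := by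
  have hi := norm_liftDeriv_map_le hx i
  have hj := norm_liftDeriv_map_le (𝓑.star_swap_mem_nbhd x hx) j
  rw [← norm_dagger] at hj
  have hprod := norm_map_mul_norm_map_le (hx.2.2.2 i j hij)
  rw [norm_star] at hprod
  have := 𝓑.M_pos
  have := 𝓑.rate_pos
  calc _ ≤ 2 * (32 * (1 + 𝓑.M + 𝓑.M ^ 2) * (𝓑.rate * ‖𝓑.map i x.1‖)) *
        (32 * (1 + 𝓑.M + 𝓑.M ^ 2) * (𝓑.rate * ‖𝓑.map j (star x.2)‖)) :=
      (norm_hermitianCross_le _ _).trans (by gcongr; exact hj)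
    _ = 2 * (32 * (1 + 𝓑.M + 𝓑.M ^ 2) * 𝓑.rate) ^ 2 *
        (‖𝓑.map i x.1‖ * ‖𝓑.map j (star x.2)‖) := by ring
    _ ≤ 2 * (32 * (1 + 𝓑.M + 𝓑.M ^ 2) * 𝓑.rate) ^ 2 * (𝓑.M ^ 2 *
        (Real.exp (-(𝓑.c * 𝓑.Λ)) * 𝓑.profile ‖x.1‖ * 𝓑.profile ‖x.2‖)) := by gcongr
    _ = _ := by ring

theorem norm_interaction_le (hx : x ∈ 𝓑.nbhd) :
    ‖𝓑.interaction x‖ ≤ 2 * Real.exp (-(𝓑.c * 𝓑.Λ)) *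
      ((gradientConst (Fintype.card ι) 𝓑.M * 𝓑.rate * 𝓑.profile ‖x.1‖) *
        (gradientConst (Fintype.card ι) 𝓑.M * 𝓑.rate * 𝓑.profile ‖x.2‖)) := by
  classical
  have hsum : 𝓑.interaction x = ∑ i, ∑ j ∈ Finset.univ.erase i,
      hermitianCross ((𝓑.frame i).liftDeriv (𝓑.map i) x)
        (dagger ((𝓑.frame j).liftDeriv (𝓑.map j)) x) := by
    rw [interaction, dagger_sumDeriv, sumDeriv, map_sum hermitianCross, _root_.sum_apply,
      ← Finset.sum_sub_distrib]
    refine Finset.sum_congr rfl fun i _ => ?_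
    rw [map_sum, Finset.sum_erase_eq_sub (Finset.mem_univ i)]
  have hnonneg : 0 ≤ 2 * (32 * (1 + 𝓑.M + 𝓑.M ^ 2) * 𝓑.rate * 𝓑.M) ^ 2 *
      (Real.exp (-(𝓑.c * 𝓑.Λ)) * 𝓑.profile ‖x.1‖ * 𝓑.profile ‖x.2‖) := by
    unfold profile
    positivity
  rw [hsum]
  calc _ ≤ ∑ _i : ι, ∑ _j : ι, 2 * (32 * (1 + 𝓑.M + 𝓑.M ^ 2) * 𝓑.rate * 𝓑.M) ^ 2 *
        (Real.exp (-(𝓑.c * 𝓑.Λ)) * 𝓑.profile ‖x.1‖ * 𝓑.profile ‖x.2‖) :=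
      norm_sum_le_of_le _ fun i _ => (norm_sum_le_of_le _ fun j hj =>
        norm_hermitianCross_liftDeriv_le hx (Finset.ne_of_mem_erase hj).symm).trans
          (Finset.sum_le_sum_of_subset_of_nonneg (Finset.erase_subset _ _) fun _ _ _ => hnonneg)
    _ = _ := by
      rw [Finset.sum_const, Finset.sum_const, Finset.card_univ, nsmul_eq_mul, nsmul_eq_mul,
        gradientConst]
      ring

end BubbleConfig

end BubbleConfig

section Correction
open scoped ContDiff

namespace BubbleConfig

variable {ι : Type*} [Fintype ι] (𝓑 : BubbleConfig ι)

theorem differentiableOn_liftDeriv_map (j : ι) :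
    DifferentiableOn ℂ ((𝓑.frame j).liftDeriv (𝓑.map j)) 𝓑.domain := fun _ hx =>
  (Frame.differentiableAt_liftDeriv differentiable_map
    (one_add_ne_zero (goursatCore_subset hx) j)).differentiableWithinAt

theorem differentiableOn_sumDeriv : DifferentiableOn ℂ 𝓑.sumDeriv 𝓑.domain :=
  .fun_sum fun j _ => 𝓑.differentiableOn_liftDeriv_map j

theorem differentiableOn_interaction : DifferentiableOn ℂ 𝓑.interaction 𝓑.domain :=
  (differentiableOn_hermitianCross_dagger 𝓑.isGoursatDomain_domain 𝓑.differentiableOn_sumDeriv).sub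
    (.fun_sum fun j _ => differentiableOn_hermitianCross_dagger 𝓑.isGoursatDomain_domain
      (𝓑.differentiableOn_liftDeriv_map j))

theorem gradientConst_pos [Nonempty ι] : 0 < gradientConst (Fintype.card ι) 𝓑.M :=
  _root_.gradientConst_pos Fintype.card_pos 𝓑.M_pos

/-- The Goursat problem for the correction of the sum of the bubbles to a solution. -/
def goursatProblem [Nonempty ι] : GoursatProblem (Fin 3 → ℂ) where
  W := 𝓑.domain
  B := hermitianCross
  D := 𝓑.sumDeriv
  E := 𝓑.interaction
  a r := gradientConst (Fintype.card ι) 𝓑.M * 𝓑.rate * 𝓑.profile r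
  A r := 2 * gradientConst (Fintype.card ι) 𝓑.M * 𝓑.profile r
  β := 2
  C := 2 * gradientConst (Fintype.card ι) 𝓑.M
  ε := Real.exp (-(𝓑.c * 𝓑.Λ)) / 4
  isGoursatDomain := 𝓑.isGoursatDomain_domain
  β_pos := two_pos
  norm_B_le := norm_hermitianCross_le
  star_B := star_hermitianCross
  differentiableOn_D := 𝓑.differentiableOn_sumDeriv
  differentiableOn_E := 𝓑.differentiableOn_interaction
  dagger_E x _ := congrFun 𝓑.dagger_interaction x
  a_pos r := mul_pos (mul_pos 𝓑.gradientConst_pos 𝓑.rate_pos) (Real.exp_pos _)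
  continuous_a := by unfold profile; fun_prop
  hasDerivAt_A r := by
    refine ((((hasDerivAt_id r).const_mul 𝓑.rate).sub_const 𝓑.Λ).div_const 2).exp.const_mul
      (2 * gradientConst (Fintype.card ι) 𝓑.M) |>.congr_deriv ?_
    rw [profile, id]
    ring
  A_nonneg r := mul_nonneg (by linarith [𝓑.gradientConst_pos]) (Real.exp_pos _).le
  A_le _ hx := mul_le_of_le_one_right (by linarith [𝓑.gradientConst_pos])
    (profile_le_one (goursatCore_subset hx).1)
  norm_D_le x hx := norm_sumDeriv_le (goursatCore_subset hx)
  norm_E_le x hx := (norm_interaction_le (goursatCore_subset hx)).trans_eq (by ring)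
  ε_nonneg := by positivity
  ε_le := by
    have hexp : Real.exp (-(𝓑.c * 𝓑.Λ)) *
        Real.exp (16 * 2 * (2 * gradientConst (Fintype.card ι) 𝓑.M)) ≤ 1 := by
      rw [← Real.exp_add]
      exact Real.exp_le_one_iff.2 (by linarith [𝓑.gradientConst_le])
    exact (div_mul_eq_mul_div _ _ _).trans_le
      ((div_le_self (by positivity) (by norm_num)).trans hexp)

/-- The sum of all bubbles, extended to `ℂ × ℂ`. -/
def sumLift (x : ℂ × ℂ) : Fin 3 → ℂ := ∑ j, (𝓑.frame j).lift (𝓑.map j) x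

theorem realDiag_sumLift (z : ℂ) :
    realDiag 𝓑.sumLift z = ∑ j, (𝓑.frame j).stereoInv (𝓑.map j z) := by
  simp only [← Frame.realDiag_lift, realDiag, sumLift, map_sum]

theorem differentiableOn_sumLift : DifferentiableOn ℂ 𝓑.sumLift 𝓑.domain :=
  .fun_sum fun j _ _ hx => (Frame.differentiableAt_lift differentiable_map
    (one_add_ne_zero (goursatCore_subset hx) j)).differentiableWithinAt

variable {𝓑} {x : ℂ × ℂ}

theorem hasDerivAt_sumLift_fst (hx : x ∈ 𝓑.domain) :
    HasDerivAt (fun z => 𝓑.sumLift (z, x.2)) (𝓑.sumDeriv x) x.1 :=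
  .fun_sum fun j _ => Frame.hasDerivAt_lift_fst differentiable_map
    (one_add_ne_zero (goursatCore_subset hx) j)

theorem hasDerivAt_sumLift_snd (hx : x ∈ 𝓑.domain) :
    HasDerivAt (fun w => 𝓑.sumLift (x.1, w)) (dagger 𝓑.sumDeriv x) x.2 := by
  rw [dagger_sumDeriv]
  exact .fun_sum fun j _ => Frame.hasDerivAt_lift_snd differentiable_map
    (one_add_ne_zero (goursatCore_subset hx) j)

theorem hasDerivAt_sumDeriv_snd (hx : x ∈ 𝓑.domain) :
    HasDerivAt (fun w => 𝓑.sumDeriv (x.1, w))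
      (hermitianCross (𝓑.sumDeriv x) (dagger 𝓑.sumDeriv x) - 𝓑.interaction x) x.2 := by
  rw [interaction, sub_sub_cancel]
  exact .fun_sum fun j _ => Frame.hasDerivAt_liftDeriv_snd differentiable_map
    (one_add_ne_zero (goursatCore_subset hx) j)

variable (𝓑)

theorem exists_hSystem_solution [Nonempty ι] : ∃ u : ℂ → R3, ∀ z, (z, star z) ∈ 𝓑.domain →
    ContDiffAt ℝ ∞ u z ∧ lap u z = (2 : ℝ) • cross (pdx u z) (pdy u z) ∧
    ‖u z - ∑ j, (𝓑.frame j).stereoInv (𝓑.map j z)‖ ≤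
      Real.exp (64 * gradientConst (Fintype.card ι) 𝓑.M - 𝓑.c * 𝓑.Λ) := by
  obtain ⟨v, p, hv, hp, h⟩ := 𝓑.goursatProblem.exists_solution
  have hW := 𝓑.isGoursatDomain_domain
  have hY : DifferentiableOn ℂ (𝓑.sumLift + v) 𝓑.domain := 𝓑.differentiableOn_sumLift.add hv
  refine ⟨realDiag (𝓑.sumLift + v), fun z hz => ⟨?_, ?_, ?_⟩⟩
  · exact contDiffAt_realDiag ((contDiffOn_of_differentiableOn_finiteDimensional hW.isOpen
      hY).contDiffAt (hW.isOpen.mem_nhds hz))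
  · refine lap_realDiag hW hY (𝓑.differentiableOn_sumDeriv.add hp)
      (fun x hx => (hasDerivAt_sumLift_fst hx).add (h x hx).1)
      (fun x hx => ?_) (fun x hx => ?_) hz
    · exact ((hasDerivAt_sumLift_snd hx).add (h x hx).2.1).congr_deriv (star_add _ _).symm
    · have hdagger : dagger (𝓑.sumDeriv + p) x = dagger 𝓑.sumDeriv x + dagger p x := star_add _ _
      refine ((hasDerivAt_sumDeriv_snd hx).add (h x hx).2.2.1).congr_deriv ?_
      simp only [hdagger, GoursatProblem.rhs, goursatProblem, Pi.add_apply, map_add,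
        _root_.add_apply]
      abel
  · rw [← realDiag_sumLift, realDiag, realDiag, ← map_sub, Pi.add_apply, add_sub_cancel_left]
    refine ((norm_reVec_le _).trans
      (mul_le_mul_of_nonneg_left (h _ hz).2.2.2 zero_le_two)).trans ?_
    simp only [goursatProblem]
    rw [← mul_assoc (16 * 2 : ℝ), show (16 * 2 * 2 : ℝ) = 64 by norm_num, sub_eq_neg_add,
      Real.exp_add]
    have := mul_pos (Real.exp_pos (-(𝓑.c * 𝓑.Λ)))
      (Real.exp_pos (64 * gradientConst (Fintype.card ι) 𝓑.M))
    linear_combination (31 / 32 : ℝ) * this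

end BubbleConfig

end Correction

section Diagonal

-- The logarithmic bound `h` forces `s`, `t` and `x` to be within `O(ℓ / l)` of `1`, hence `y` to be
-- within `O(√(ℓ / l))` of `0`.
theorem abs_mul_sub_mul_le_one {l ℓ s t x y : ℝ} (hℓ : 1 ≤ ℓ) (hl : 2 * ℓ ^ 3 ≤ l)
    (hs : s ∈ Icc 0 1) (ht : t ∈ Icc 0 1) (hxy : x ^ 2 + y ^ 2 ≤ 1)
    (h : l * (2 - (s + t) * x) ≤ ℓ) : |l * (s - t) * y| ≤ 1 := by
  obtain ⟨hs0, hs1⟩ := hs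
  obtain ⟨ht0, ht1⟩ := ht
  have hℓl : ℓ ≤ l := by nlinarith [sq_nonneg ℓ, mul_nonneg (sq_nonneg ℓ) (sub_nonneg.2 hℓ)]
  have hl0 : 0 < l := by linarith
  have hx1 : x ≤ 1 := by nlinarith
  have hx0 : 0 ≤ x := by
    by_contra! hx
    have : (s + t) * x ≤ 0 := mul_nonpos_of_nonneg_of_nonpos (by linarith) hx.le
    nlinarith
  have hst : l * (2 - (s + t)) ≤ ℓ := le_trans (by gcongr; nlinarith) h
  have hx : l * (2 - 2 * x) ≤ ℓ := le_trans (by gcongr; linarith) h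
  have hsub : (l * (s - t)) ^ 2 ≤ ℓ ^ 2 :=
    sq_le_sq' (by nlinarith) (by nlinarith)
  have hy : l * y ^ 2 ≤ ℓ := by
    nlinarith [mul_nonneg hl0.le (sq_nonneg (1 - x)), mul_le_mul_of_nonneg_left hxy hl0.le]
  have hprod : l * (l * (s - t) * y) ^ 2 ≤ ℓ ^ 3 := by
    calc l * (l * (s - t) * y) ^ 2 = (l * (s - t)) ^ 2 * (l * y ^ 2) := by ring
      _ ≤ ℓ ^ 2 * ℓ := by gcongr
      _ = ℓ ^ 3 := by ring
  rw [← sq_le_one_iff_abs_le_one]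
  by_contra! hc
  nlinarith [pow_pos (zero_lt_one.trans_le hℓ) 3]

theorem half_le_norm_one_add_mul_exp {a : ℝ} {w : ℂ} (ha : 0 < a)
    (h : -Real.log (2 * a) ≤ w.re → |w.im| ≤ 1) : 1 / 2 ≤ ‖1 + a * Complex.exp w‖ := by
  rcases lt_or_ge (a * Real.exp w.re) (1 / 2) with hlt | hge
  · have hnorm : ‖a * Complex.exp w‖ = a * Real.exp w.re := by
      rw [norm_mul, Complex.norm_exp, Complex.norm_of_nonneg ha.le]
    have := norm_sub_norm_le (1 : ℂ) (-(a * Complex.exp w))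
    rw [norm_neg, hnorm, norm_one, sub_neg_eq_add] at this
    linarith
  · have hre : -Real.log (2 * a) ≤ w.re := by
      rw [← Real.log_inv, Real.log_le_iff_le_exp (by positivity),
        inv_le_iff_one_le_mul₀ (by positivity)]
      linarith
    have him := abs_le.1 (h hre)
    have hcos : 0 ≤ Real.cos w.im := Real.cos_nonneg_of_mem_Icc
      ⟨by linarith [Real.pi_gt_three], by linarith [Real.pi_gt_three]⟩
    have hnonneg : 0 ≤ (a * Complex.exp w).re := by
      rw [Complex.re_ofReal_mul, Complex.exp_re]
      positivity
    have := Complex.re_le_norm (1 + a * Complex.exp w)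
    rw [Complex.add_re, Complex.one_re] at this
    linarith

namespace BubbleConfig

variable {ι : Type*} [Fintype ι] {𝓑 : BubbleConfig ι} {i j : ι} {z : ℂ}

theorem height_add_height_le (hz : ‖z‖ ≤ 1) (hij : i ≠ j) :
    𝓑.height i z + 𝓑.height j z ≤ 2 - 2 * 𝓑.c := by
  rw [height, height, ← Complex.add_re, ← add_mul, ← star_add]
  refine (Complex.re_le_norm _).trans ?_
  rw [norm_mul, norm_star]
  exact (mul_le_of_le_one_right (norm_nonneg _) hz).trans (𝓑.norm_pt_add_pt_le i j hij)

theorem height_ofReal_mul (s : ℝ) : 𝓑.height j (s * z) = s * 𝓑.height j z := by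
  rw [height, mul_left_comm, Complex.re_ofReal_mul, height]

theorem height_mul_add_height_mul_lt (hz : ‖z‖ ≤ 1) (hij : i ≠ j) {s t : ℝ} (hs : s ∈ Icc 0 1)
    (ht : t ∈ Icc 0 1) :
    𝓑.height i (s * z) + 𝓑.height j (t * z) < 𝓑.radius * (2 - 2 * 𝓑.c) := by
  rw [height_ofReal_mul, height_ofReal_mul]
  have hsum := height_add_height_le (𝓑 := 𝓑) hz hij
  have hi := (height_le_norm (𝓑 := 𝓑) (j := i)).trans hz
  have hj := (height_le_norm (𝓑 := 𝓑) (j := j)).trans hz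
  have := 𝓑.c_le
  refine lt_of_le_of_lt ?_ (lt_mul_of_one_lt_left (by linarith) 𝓑.one_lt_radius)
  obtain ⟨hs0, hs1⟩ := hs
  obtain ⟨ht0, ht1⟩ := ht
  rcases le_total 0 (𝓑.height i z) with _ | _ <;>
    rcases le_total 0 (𝓑.height j z) with _ | _ <;>
      nlinarith

theorem map_mul_star_map (s t : ℝ) : 𝓑.map j (s * z) * star (𝓑.map j (t * z)) =
    (𝓑.M ^ 2 : ℝ) * Complex.exp (𝓑.rate * (s * (star (𝓑.pt j) * z) +
      t * star (star (𝓑.pt j) * z)) - (2 * 𝓑.Λ : ℝ)) := by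
  simp only [map, star_mul', Complex.star_def, ← Complex.exp_conj, map_sub, map_mul,
    Complex.conj_ofReal, Complex.conj_conj]
  rw [mul_mul_mul_comm, ← Complex.exp_add]
  push_cast
  ring_nf

theorem half_le_norm_one_add_map_mul (hz : ‖z‖ ≤ 1) {s t : ℝ} (hs : s ∈ Icc 0 1)
    (ht : t ∈ Icc 0 1) : 1 / 2 ≤ ‖1 + 𝓑.map j (s * z) * star (𝓑.map j (t * z))‖ := by
  rw [map_mul_star_map]
  set q := star (𝓑.pt j) * z with hq
  have hnorm : q.re ^ 2 + q.im ^ 2 ≤ 1 := by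
    rw [← norm_sq_eq_re_im, hq, norm_mul, norm_star, 𝓑.norm_pt, one_mul]
    exact pow_le_one₀ (norm_nonneg z) hz
  set w : ℂ := 𝓑.rate * (s * q + t * star q) - (2 * 𝓑.Λ : ℝ) with hw
  have hre : w.re = 𝓑.rate * ((s + t) * q.re) - 2 * 𝓑.Λ := by
    simp only [hw, Complex.sub_re, Complex.re_ofReal_mul, Complex.add_re, Complex.star_def,
      Complex.conj_re, Complex.ofReal_re]
    ring
  have him : w.im = 𝓑.rate * (s - t) * q.im := by
    simp only [hw, Complex.sub_im, Complex.im_ofReal_mul, Complex.add_im, Complex.star_def,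
      Complex.conj_im, Complex.ofReal_im]
    ring
  refine half_le_norm_one_add_mul_exp (pow_pos 𝓑.M_pos 2) fun h => ?_
  rw [him]
  exact abs_mul_sub_mul_le_one 𝓑.one_le_log 𝓑.log_pow_le hs ht hnorm (by linarith [𝓑.rate_lt])

theorem mem_domain_of_norm_le_one (hz : ‖z‖ ≤ 1) : (z, star z) ∈ 𝓑.domain := by
  have hscale : ∀ s ∈ Icc (0 : ℝ) 1, ‖s * z‖ < 𝓑.radius := fun s hs => by
    rw [norm_mul, Complex.norm_of_nonneg hs.1]
    exact (mul_le_one₀ hs.2 (norm_nonneg z) hz).trans_lt 𝓑.one_lt_radius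
  rintro ⟨s, t⟩ ⟨hs, ht⟩
  have hstar : star (t * star z) = t * z := by simp
  refine ⟨hscale s hs, ?_, fun j => ?_, fun i j hij => ?_⟩
  · rw [← norm_star, hstar]
    exact hscale t ht
  · rw [hstar]
    exact lt_of_lt_of_le (by norm_num) (half_le_norm_one_add_map_mul hz hs ht)
  · rw [hstar]
    exact height_mul_add_height_mul_lt hz hij hs ht

end BubbleConfig

end Diagonal

section Image
namespace BubbleConfig

variable {ι : Type*} [Fintype ι] (𝓑 : BubbleConfig ι)

/-- The distance up to which a solution close to the sum of the bubbles is described by one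
bubble. -/
def error : ℝ := Fintype.card ι * (2 * 𝓑.M * Real.exp (-(𝓑.c * 𝓑.Λ))) +
  Real.exp (64 * gradientConst (Fintype.card ι) 𝓑.M - 𝓑.c * 𝓑.Λ)

variable {𝓑} {i j : ι} {z : ℂ}

theorem error_nonneg : 0 ≤ 𝓑.error := by
  have := 𝓑.M_pos
  unfold error
  positivity

theorem norm_stereoInv_map_le (h : 𝓑.height i z ≤ 1 - 𝓑.c) :
    ‖(𝓑.frame i).stereoInv (𝓑.map i z)‖ ≤ 2 * 𝓑.M * Real.exp (-(𝓑.c * 𝓑.Λ)) := by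
  refine ((𝓑.frame i).norm_stereoInv_le _).trans ?_
  rw [norm_map, mul_assoc]
  have hheight := mul_le_mul_of_nonneg_left h 𝓑.rate_pos.le
  have hrate : 𝓑.rate * (1 - 𝓑.c) ≤ 𝓑.Λ * (1 - 𝓑.c) :=
    mul_le_mul_of_nonneg_right 𝓑.rate_lt.le (by linarith [𝓑.c_le])
  have := 𝓑.M_pos
  gcongr
  linarith

theorem norm_sum_stereoInv_map_sub_le (h : ∀ i ≠ j, 𝓑.height i z ≤ 1 - 𝓑.c) :
    ‖∑ i, (𝓑.frame i).stereoInv (𝓑.map i z) - (𝓑.frame j).stereoInv (𝓑.map j z)‖ ≤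
      Fintype.card ι * (2 * 𝓑.M * Real.exp (-(𝓑.c * 𝓑.Λ))) := by
  classical
  rw [← Finset.sum_erase_eq_sub (Finset.mem_univ j)]
  refine (norm_sum_le_of_le _ fun i hi =>
    norm_stereoInv_map_le (h i (Finset.ne_of_mem_erase hi))).trans ?_
  rw [Finset.sum_const, nsmul_eq_mul]
  have := 𝓑.M_pos
  gcongr
  exact Finset.card_le_univ _

theorem exists_forall_ne_height_le [Nonempty ι] (hz : ‖z‖ ≤ 1) :
    ∃ j, ∀ i ≠ j, 𝓑.height i z ≤ 1 - 𝓑.c := by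
  by_cases! h : ∃ j, 1 - 𝓑.c < 𝓑.height j z
  · obtain ⟨j, hj⟩ := h
    exact ⟨j, fun i hij => by linarith [height_add_height_le (𝓑 := 𝓑) hz hij]⟩
  · exact ⟨Classical.arbitrary ι, fun i _ => h i⟩

/-- The parameters are so extreme that, up to `4 * δ`, every bubble covers its sphere on the part
of the disk where the other bubbles are negligible. -/
structure Covers (𝓑 : BubbleConfig ι) (δ : ℝ) : Prop where
  pos : 0 < δ
  lt_one : δ < 1
  exp_div_le : Real.exp 2 / δ ≤ 𝓑.M
  seven_le : 7 ≤ 𝓑.Λ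
  log_div_le : Real.log (𝓑.M / δ) ≤ 𝓑.c * 𝓑.rate

theorem Covers.log_re_mem_Icc {δ : ℝ} (h : 𝓑.Covers δ) {ζ : ℂ} (hδ : δ ≤ ‖ζ‖) (hδ' : ‖ζ‖ ≤ δ⁻¹) :
    (Complex.log (ζ / 𝓑.M)).re ∈ Icc (-(𝓑.c * 𝓑.rate)) (-2) := by
  have hM := 𝓑.M_pos
  have hδ0 := h.pos
  have hζ : 0 < ‖ζ‖ := h.pos.trans_le hδ
  rw [Complex.log_re, norm_div, Complex.norm_of_nonneg hM.le]
  constructor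
  · refine (neg_le_neg h.log_div_le).trans ?_
    rw [← Real.log_inv, inv_div]
    gcongr
  · rw [Real.log_le_iff_le_exp (by positivity), Real.exp_neg, div_le_iff₀ hM,
      ← div_eq_inv_mul, le_div_iff₀ (Real.exp_pos 2)]
    refine le_trans ?_ h.exp_div_le
    rw [div_eq_inv_mul]
    gcongr

theorem star_pt_mul_pt_mul (q : ℂ) : star (𝓑.pt j) * (𝓑.pt j * q) = q := by
  rw [← mul_assoc, mul_comm (star _), Complex.star_def, Complex.mul_conj', 𝓑.norm_pt]
  simp

theorem map_eq_of_log {ζ : ℂ} (hζ : ζ ≠ 0) :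
    𝓑.map j (𝓑.pt j * ((𝓑.Λ + Complex.log (ζ / 𝓑.M)) / 𝓑.rate)) = ζ := by
  have hM : (𝓑.M : ℂ) ≠ 0 := Complex.ofReal_ne_zero.2 𝓑.M_pos.ne'
  rw [map, star_pt_mul_pt_mul, mul_div_cancel₀ _ (Complex.ofReal_ne_zero.2 𝓑.rate_pos.ne'),
    add_sub_cancel_left, Complex.exp_log (div_ne_zero hζ hM), mul_div_cancel₀ _ hM]

theorem Covers.norm_le_one {δ : ℝ} (h : 𝓑.Covers δ) {l : ℂ}
    (hre : l.re ∈ Icc (-(𝓑.c * 𝓑.rate)) (-2)) (him : |l.im| ≤ Real.pi) :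
    ‖(𝓑.Λ + l) / 𝓑.rate‖ ≤ 1 := by
  have hrate := 𝓑.rate_pos
  have hΛ : 𝓑.Λ = 𝓑.rate + 1 := (sub_add_cancel _ _).symm
  have hc := mul_le_mul_of_nonneg_right 𝓑.c_le hrate.le
  rw [norm_div, Complex.norm_of_nonneg hrate.le, div_le_one hrate,
    ← sq_le_sq₀ (norm_nonneg _) hrate.le, norm_sq_eq_re_im]
  simp only [Complex.add_re, Complex.ofReal_re, Complex.add_im, Complex.ofReal_im, zero_add]
  have hreal : (𝓑.Λ + l.re) ^ 2 ≤ (𝓑.rate - 1) ^ 2 :=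
    pow_le_pow_left₀ (by linarith [hre.1]) (by linarith [hre.2]) 2
  have himag : l.im ^ 2 ≤ 3.15 ^ 2 := sq_le_sq' (by linarith [neg_le_of_abs_le him,
    Real.pi_lt_d2]) (by linarith [le_of_abs_le him, Real.pi_lt_d2])
  linarith [h.seven_le]

theorem Covers.exists_map_eq {δ : ℝ} (h : 𝓑.Covers δ) (j : ι) {ζ : ℂ} (hδ : δ ≤ ‖ζ‖)
    (hδ' : ‖ζ‖ ≤ δ⁻¹) : ∃ z, ‖z‖ ≤ 1 ∧ 𝓑.map j z = ζ ∧ 1 - 𝓑.c ≤ 𝓑.height j z := by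
  have hre := h.log_re_mem_Icc hδ hδ'
  refine ⟨𝓑.pt j * ((𝓑.Λ + Complex.log (ζ / 𝓑.M)) / 𝓑.rate), ?_,
    map_eq_of_log (norm_pos_iff.1 (h.pos.trans_le hδ)), ?_⟩
  · rw [norm_mul, 𝓑.norm_pt, one_mul]
    exact h.norm_le_one hre ((Complex.log_im _).symm ▸ Complex.abs_arg_le_pi _)
  · rw [height, star_pt_mul_pt_mul, Complex.div_ofReal_re, Complex.add_re, Complex.ofReal_re,
      le_div_iff₀ 𝓑.rate_pos]
    linarith [hre.1, 𝓑.rate_lt]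

theorem Covers.hausdorffDist_image_le [Nonempty ι] {δ : ℝ} (h : 𝓑.Covers δ) {u : ℂ → R3}
    (hu : ∀ z, ‖z‖ ≤ 1 → ‖u z - ∑ j, (𝓑.frame j).stereoInv (𝓑.map j z)‖ ≤
      Real.exp (64 * gradientConst (Fintype.card ι) 𝓑.M - 𝓑.c * 𝓑.Λ)) :
    hausdorffDist (u '' closedBall 0 1) (⋃ j, sphere (𝓑.frame j).v 1) ≤ 𝓑.error + 4 * δ := by
  have hdist : ∀ z j, ‖z‖ ≤ 1 → (∀ i ≠ j, 𝓑.height i z ≤ 1 - 𝓑.c) →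
      dist (u z) ((𝓑.frame j).stereoInv (𝓑.map j z)) ≤ 𝓑.error := fun z j hz hj => by
    rw [dist_eq_norm, error, add_comm]
    exact (norm_sub_le_norm_sub_add_norm_sub _ _ _).trans
      (add_le_add (hu z hz) (norm_sum_stereoInv_map_sub_le hj))
  have := error_nonneg (𝓑 := 𝓑)
  have := h.pos
  refine hausdorffDist_le_of_mem_dist (by positivity) ?_ fun y hy => ?_
  · rintro _ ⟨z, hz, rfl⟩
    rw [mem_closedBall_zero_iff] at hz
    obtain ⟨j, hj⟩ := exists_forall_ne_height_le (𝓑 := 𝓑) hz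
    exact ⟨_, mem_iUnion_of_mem j ((𝓑.frame j).stereoInv_mem_sphere _),
      by linarith [hdist z j hz hj]⟩
  · obtain ⟨j, hy⟩ := mem_iUnion.1 hy
    obtain ⟨ζ, hδ, hδ', hζ⟩ := (𝓑.frame j).exists_dist_stereoInv_le hy h.pos h.lt_one
    obtain ⟨z, hz, rfl, hheight⟩ := h.exists_map_eq j hδ hδ'
    refine ⟨u z, mem_image_of_mem u (by simpa using hz), ?_⟩
    rw [dist_comm]
    exact (dist_triangle _ _ _).trans (add_le_add (hdist z j hz fun i hij => by
      linarith [height_add_height_le (𝓑 := 𝓑) hz hij]) hζ)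

end BubbleConfig

end Image

section Existence
open scoped ContDiff

theorem exists_norm_eq_one_norm_add_le (ι : Type*) [Finite ι] :
    ∃ (a : ι → ℂ) (c : ℝ), (∀ j, ‖a j‖ = 1) ∧ c ∈ Ioc 0 (1 / 2) ∧
      ∀ i j, i ≠ j → ‖a i + a j‖ ≤ 2 - 2 * c := by
  obtain ⟨n, ⟨e⟩⟩ := Finite.exists_equiv_fin ι
  obtain ⟨a, hnorm, hinj⟩ : ∃ a : ι → ℂ, (∀ j, ‖a j‖ = 1) ∧ Function.Injective a := by
    rcases eq_or_ne n 0 with rfl | hn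
    · have := e.isEmpty
      exact ⟨isEmptyElim, isEmptyElim, Function.injective_of_subsingleton _⟩
    · have hroot := Complex.isPrimitiveRoot_exp n hn
      exact ⟨fun j => _ ^ (e j : ℕ), fun j => by rw [norm_pow, hroot.norm'_eq_one hn, one_pow],
        fun i j h => e.injective (Fin.ext (hroot.pow_inj (e i).2 (e j).2 h))⟩
  have hlt : ∀ i j, i ≠ j → ‖a i + a j‖ < 2 - 2 * 0 := fun i j hij => by
    have := norm_add_lt_of_not_sameRay
      ((not_sameRay_iff_of_norm_eq ((hnorm i).trans (hnorm j).symm)).2 (hinj.ne hij))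
    rw [hnorm, hnorm] at this
    linarith
  have hsep : ∀ᶠ c : ℝ in 𝓝[>] 0, ∀ i j, i ≠ j → ‖a i + a j‖ ≤ 2 - 2 * c := by
    simp only [eventually_all]
    intro i j hij
    have hcont : ContinuousWithinAt (fun c : ℝ => 2 - 2 * c) (Ioi 0) 0 := by fun_prop
    exact (hcont.tendsto.eventually_const_lt (hlt i j hij)).mono fun _ => le_of_lt
  obtain ⟨c, hsep, hc⟩ := (hsep.and (Ioc_mem_nhdsGT one_half_pos)).exists
  exact ⟨a, c, hnorm, hc, hsep⟩

theorem BubbleConfig.exists_covers_error_le {ι : Type*} [Fintype ι] {v : ι → R3}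
    (hv : ∀ j, ‖v j‖ = 1) {δ ε : ℝ} (hδ : 0 < δ) (hδ1 : δ < 1) (hε : 0 < ε) :
    ∃ 𝓑 : BubbleConfig ι, (∀ j, (𝓑.frame j).v = v j) ∧ 𝓑.Covers δ ∧ 𝓑.error ≤ ε := by
  choose F hF using fun j => exists_frame (hv j)
  obtain ⟨pt, c, hpt, hc, hsep⟩ := exists_norm_eq_one_norm_add_le ι
  set M := Real.exp 2 / δ with hM
  set K := gradientConst (Fintype.card ι) M
  have hM2 : 2 ≤ M := by
    rw [hM, le_div_iff₀ hδ]
    linarith [Real.add_one_le_exp 2]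
  have hrate : Tendsto (fun Λ : ℝ => Λ - 1) atTop atTop :=
    tendsto_atTop_add_const_right _ _ tendsto_id
  have hcΛ : Tendsto (fun Λ => c * Λ) atTop atTop := tendsto_id.const_mul_atTop hc.1
  have herror : Tendsto (fun Λ => Fintype.card ι * (2 * M * Real.exp (-(c * Λ))) +
      Real.exp (64 * K - c * Λ)) atTop (𝓝 0) := by
    have hexp := Real.tendsto_exp_neg_atTop_nhds_zero.comp hcΛ
    convert ((hexp.const_mul (2 * M)).const_mul (Fintype.card ι : ℝ)).add
      (hexp.const_mul (Real.exp (64 * K))) using 2 with Λ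
    · rw [sub_eq_add_neg, Real.exp_add, Function.comp_apply]
    · simp only [mul_zero, add_zero]
  obtain ⟨Λ, h7, hlog, hgrad, herr, hcov⟩ := ((eventually_ge_atTop (7 : ℝ)).and
    ((hrate.eventually_ge_atTop (2 * Real.log (2 * M ^ 2) ^ 3)).and
    ((hcΛ.eventually_ge_atTop (64 * K)).and ((herror.eventually_le_const hε).and
    ((hrate.const_mul_atTop hc.1).eventually_ge_atTop (Real.log (M / δ))))))).exists
  exact ⟨⟨F, pt, M, Λ, c, hpt, hM2, hc.1, hc.2, hsep, hlog, hgrad⟩, hF,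
    ⟨hδ, hδ1, le_rfl, h7, hcov⟩, herr⟩

theorem exists_hSystem_solution_hausdorffDist_le {ι : Type*} [Finite ι] [Nonempty ι] {v : ι → R3}
    (hv : ∀ j, ‖v j‖ = 1) {ε : ℝ} (hε : 0 < ε) :
    ∃ (u : ℂ → R3) (O : Set ℂ), IsOpen O ∧ closedBall 0 1 ⊆ O ∧
      (∀ z ∈ O, ContDiffAt ℝ ∞ u z ∧ lap u z = (2 : ℝ) • cross (pdx u z) (pdy u z)) ∧
      hausdorffDist (u '' closedBall 0 1) (⋃ j, sphere (v j) 1) ≤ ε := by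
  have := Fintype.ofFinite ι
  obtain ⟨δ, hδ, hδ'⟩ := exists_between (lt_min (by positivity : 0 < ε / 8) one_pos)
  obtain ⟨hδε, hδ1⟩ := lt_min_iff.1 hδ'
  obtain ⟨𝓑, hF, hcov, herr⟩ := BubbleConfig.exists_covers_error_le hv hδ hδ1 (half_pos hε)
  obtain ⟨u, hu⟩ := 𝓑.exists_hSystem_solution
  have hmem : ∀ z : ℂ, ‖z‖ ≤ 1 → (z, star z) ∈ 𝓑.domain := fun z hz =>
    BubbleConfig.mem_domain_of_norm_le_one hz
  refine ⟨u, {z | (z, star z) ∈ 𝓑.domain}, 𝓑.isGoursatDomain_domain.isOpen.preimage (by fun_prop),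
    fun z hz => hmem z (by simpa using hz), fun z hz => ⟨(hu z hz).1, (hu z hz).2.1⟩, ?_⟩
  have hdist := hcov.hausdorffDist_image_le fun z hz => (hu z (hmem z hz)).2.2
  simp only [hF] at hdist
  linarith

theorem exists_contDiff_eqOn_closedBall {E F : Type*} [NormedAddCommGroup E] [NormedSpace ℝ E]
    [FiniteDimensional ℝ E] [NormedAddCommGroup F] [NormedSpace ℝ F] {u : E → F} {O : Set E}
    (hO : IsOpen O) {c : E} {r : ℝ} (hr : 0 < r) (hsub : closedBall c r ⊆ O)
    (hu : ∀ z ∈ O, ContDiffAt ℝ ∞ u z) :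
    ∃ g : E → F, ContDiff ℝ ∞ g ∧ EqOn g u (closedBall c r) := by
  have : ProperSpace E := FiniteDimensional.proper ℝ E
  obtain ⟨R, hR, hRO⟩ := (isCompact_closedBall c r).exists_cthickening_subset_open hO hsub
  rw [cthickening_closedBall hR.le hr.le] at hRO
  let f : ContDiffBump c := ⟨r, R + r, hr, lt_add_of_pos_left r hR⟩
  refine ⟨fun z => f z • u z, contDiff_iff_contDiffAt.2 fun z => ?_, fun z hz => ?_⟩
  · by_cases hz : z ∈ O
    · exact f.contDiffAt.smul (hu z hz)
    · have hf := notMem_tsupport_iff_eventuallyEq.1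
        (f.tsupport_eq ▸ fun h => hz (hRO h) : z ∉ tsupport f)
      exact contDiffAt_const.congr_of_eventuallyEq
        (hf.mono fun w hw => (congrArg (· • u w) hw).trans (zero_smul ℝ (u w)))
  · simp [f.one_of_mem_closedBall hz]

end Existence

/-- Given `k ≥ 1` unit spheres in `ℝ³`, each passing through the origin (centers `v j` with
`‖v j‖ = 1`), there exist positive `εₙ → 0`, smooth boundary data `gₙ`, and maps `uₙ`,
continuous on the closed unit disk and `C²` in the open disk, solving the H-system
`Δu = 2 uₓ ∧ u_y` in the disk with `uₙ = εₙ gₙ` on the boundary circle, whose images converge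
in Hausdorff distance to the union of the spheres. -/
theorem multi_bubble_construction
    (k : ℕ) (hk : 1 ≤ k) (v : Fin k → R3) (hv : ∀ j, ‖v j‖ = 1) :
    ∃ (ε : ℕ → ℝ) (g : ℕ → ℂ → R3) (u : ℕ → ℂ → R3),
      (∀ n, 0 < ε n) ∧
      Tendsto ε atTop (nhds 0) ∧
      (∀ n, ContDiff ℝ (⊤ : ℕ∞) (g n)) ∧
      (∀ n, ContinuousOn (u n) (closedBall (0 : ℂ) 1)) ∧
      (∀ n, ContDiffOn ℝ 2 (u n) (ball (0 : ℂ) 1)) ∧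
      (∀ n, ∀ z ∈ ball (0 : ℂ) 1,
          lap (u n) z = (2 : ℝ) • cross (pdx (u n) z) (pdy (u n) z)) ∧
      (∀ n, ∀ z ∈ sphere (0 : ℂ) 1, u n z = ε n • g n z) ∧
      Tendsto (fun n => hausdorffDist (u n '' closedBall (0 : ℂ) 1) (⋃ j, sphere (v j) 1))
        atTop (nhds 0) := by
  have : Nonempty (Fin k) := ⟨⟨0, hk⟩⟩
  have hε : ∀ n : ℕ, (0 : ℝ) < 1 / (n + 1) := fun n => Nat.one_div_pos_of_nat
  choose u O hO hsub hu hdist using fun n => exists_hSystem_solution_hausdorffDist_le hv (hε n)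
  choose g hg hgu using fun n =>
    exists_contDiff_eqOn_closedBall (hO n) one_pos (hsub n) fun z hz => (hu n z hz).1
  refine ⟨fun n => 1 / (n + 1), fun n z => (1 / (n + 1) : ℝ)⁻¹ • g n z, u, hε,
    tendsto_one_div_add_atTop_nhds_zero_nat, fun n => (hg n).const_smul _,
    fun n z hz => (hu n z (hsub n hz)).1.continuousAt.continuousWithinAt,
    fun n z hz => ((hu n z (hsub n (ball_subset_closedBall hz))).1.of_le
      (WithTop.coe_le_coe.2 le_top)).contDiffWithinAt,
    fun n z hz => (hu n z (hsub n (ball_subset_closedBall hz))).2, fun n z hz => ?_,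
    squeeze_zero (fun n => hausdorffDist_nonneg) hdist tendsto_one_div_add_atTop_nhds_zero_nat⟩
  rw [smul_inv_smul₀ (hε n).ne', hgu n (sphere_subset_closedBall hz)]
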